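/- For all n sufficiently large (n a multiple of 4) there exists a distribution in an NSSBM family on which unnormalized spectral bisection is strongly consistent, while normalized spectral bisection (with either the symmetric normalized Laplacian 𝓛_sym or the random-walk Laplacian 𝓛_rw) misclassifies at least a 24% fraction of the vertices with probability at least 1 − 1/n. Concretely, this holds for the nested block instance with parameters p ≥ c·log n / n, p/q = α ≥ 2 a constant, K ≥ 3α, where edges within L1 and within L2 appear independently with probability Kp, edges between L1 and L2 and within R appear independently with probability p, and edges between L = L1 ∪ L2 and R appear independently with probability q. -/

import Mathlib

open Matrix MeasureTheory
open scoped BigOperators ENNReal Classical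

noncomputable section

instance measSG {n : ℕ} : MeasurableSpace (SimpleGraph (Fin n)) := ⊤

variable {n : ℕ}

/-- Adjacency matrix of a graph, over `ℝ`. -/
def adjM (G : SimpleGraph (Fin n)) : Matrix (Fin n) (Fin n) ℝ :=
  Matrix.of fun v w => if G.Adj v w then 1 else 0

/-- Laplacian of a weighted adjacency matrix. -/
def wlap (W : Matrix (Fin n) (Fin n) ℝ) : Matrix (Fin n) (Fin n) ℝ :=
  Matrix.diagonal (fun v => ∑ w, W v w) - W

/-- Unnormalized Laplacian of a graph. -/
def lap (G : SimpleGraph (Fin n)) : Matrix (Fin n) (Fin n) ℝ := wlap (adjM G)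

/-- `eig M k` is the `(k+1)`-st smallest eigenvalue (root of the characteristic
polynomial, with multiplicity) of `M`; e.g. `eig M 1 = λ₂`. -/
def eig (M : Matrix (Fin n) (Fin n) ℝ) (k : ℕ) : ℝ :=
  (M.charpoly.roots.sort (· ≤ ·)).getD k 0

def IsUnitEigenvector (M : Matrix (Fin n) (Fin n) ℝ) (t : ℝ) (u : Fin n → ℝ) : Prop :=
  M.mulVec u = t • u ∧ ∑ v, (u v) ^ 2 = 1

/-- Membership in the first community `P₁ = {1, …, n/2}`. -/
def inP1 (n : ℕ) (v : Fin n) : Prop := (v : ℕ) < n / 2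

/-- `v` and `w` are in the same community. -/
def sameSide (n : ℕ) (v w : Fin n) : Prop := inP1 n v ↔ inP1 n w

/-- Number of neighbours of `v` in its own community. -/
def din (G : SimpleGraph (Fin n)) (v : Fin n) : ℕ :=
  Nat.card {w : Fin n // G.Adj v w ∧ sameSide n v w}

/-- Number of neighbours of `v` in the other community. -/
def dout (G : SimpleGraph (Fin n)) (v : Fin n) : ℕ :=
  Nat.card {w : Fin n // G.Adj v w ∧ ¬ sameSide n v w}

/-- Degree of `v`. -/
def deg (G : SimpleGraph (Fin n)) (v : Fin n) : ℕ :=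
  Nat.card {w : Fin n // G.Adj v w}

/-- `μ` samples each pair `(v,w)`, `v < w`, as an edge independently with probability `P v w`. -/
def IsEdgeProduct (P : Fin n → Fin n → ℝ) (μ : PMF (SimpleGraph (Fin n))) : Prop :=
  ∀ G : SimpleGraph (Fin n),
    μ G = ∏ e ∈ Finset.univ.filter (fun e : Fin n × Fin n => e.1 < e.2),
      (if G.Adj e.1 e.2 then ENNReal.ofReal (P e.1 e.2) else ENNReal.ofReal (1 - P e.1 e.2))

/-- The edge-probability matrix of a member of the `NSSBM(n,p,p̄,q)` family. -/
def NSSBMprob (n : ℕ) (p pbar q : ℝ) (P : Fin n → Fin n → ℝ) : Prop :=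
  (∀ v w, P v w = P w v) ∧
  (∀ v w : Fin n, v ≠ w → sameSide n v w → p ≤ P v w ∧ P v w ≤ pbar) ∧
  (∀ v w : Fin n, ¬ sameSide n v w → P v w = q)

/-- The ideal second eigenvector `u₂⋆`. -/
def u2star (n : ℕ) : Fin n → ℝ :=
  fun v => if inP1 n v then 1 / Real.sqrt n else -(1 / Real.sqrt n)

/-- Spectral bisection with matrix `M` recovers the planted partition of `G`. -/
def BisectCorrect (n : ℕ) (M : Matrix (Fin n) (Fin n) ℝ) : Prop :=
  ∀ u : Fin n → ℝ, IsUnitEigenvector M (eig M 1) u →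
    ({v : Fin n | u v < 0} = {v : Fin n | inP1 n v} ∨
     {v : Fin n | u v < 0} = {v : Fin n | ¬ inP1 n v})

/-- Off-diagonal part of the probability matrix: the expected adjacency matrix. -/
def offP (P : Fin n → Fin n → ℝ) : Matrix (Fin n) (Fin n) ℝ :=
  Matrix.of fun v w => if v = w then 0 else P v w

/-- Expected unnormalized Laplacian. -/
def expLap (P : Fin n → Fin n → ℝ) : Matrix (Fin n) (Fin n) ℝ := wlap (offP P)

/-- Euclidean norm. -/
def l2 (x : Fin n → ℝ) : ℝ := Real.sqrt (∑ v, (x v) ^ 2)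

/-- Inner product. -/
def dotp (x y : Fin n → ℝ) : ℝ := ∑ v, x v * y v

/-- Entrywise max (ℓ∞) norm. -/
def linf (x : Fin n → ℝ) : ℝ := ⨆ v, |x v|

/-- ℓ2 → ℓ2 operator norm of a matrix. -/
def opNorm (M : Matrix (Fin n) (Fin n) ℝ) : ℝ :=
  ‖LinearMap.toContinuousLinearMap (Matrix.toEuclideanLin M)‖

/-- The crossing edges of `μ` are independent `Bernoulli(q)`, while the internal
edges are arbitrary (possibly depending on the crossing edges). -/
def CrossingProduct (n : ℕ) (q : ℝ) (μ : PMF (SimpleGraph (Fin n))) : Prop :=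
  ∃ (ν : PMF (SimpleGraph (Fin n))) (κ : SimpleGraph (Fin n) → PMF (SimpleGraph (Fin n))),
    IsEdgeProduct (fun v w => if sameSide n v w then 0 else q) ν ∧
    (∀ H, ∀ G ∈ (κ H).support, ∀ v w, ¬ sameSide n v w → ((G.Adj v w) ↔ H.Adj v w)) ∧
    μ = ν.bind κ

/-- Symmetric normalized Laplacian `I - D^{-1/2} A D^{-1/2}` of a graph. -/
def lapSym (G : SimpleGraph (Fin n)) : Matrix (Fin n) (Fin n) ℝ :=
  1 - Matrix.diagonal (fun v => 1 / Real.sqrt (deg G v)) * adjM G *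
      Matrix.diagonal (fun v => 1 / Real.sqrt (deg G v))

/-- Random-walk normalized Laplacian `I - D⁻¹ A` of a graph. -/
def lapRW (G : SimpleGraph (Fin n)) : Matrix (Fin n) (Fin n) ℝ :=
  1 - Matrix.diagonal (fun v => ((deg G v : ℝ))⁻¹) * adjM G

/-- Membership in `L₁ = {1, …, n/4}`. -/
def inL1 (n : ℕ) (v : Fin n) : Prop := (v : ℕ) < n / 4

/-- Membership in `L₂ = {n/4+1, …, n/2}`. -/
def inL2 (n : ℕ) (v : Fin n) : Prop := n / 4 ≤ (v : ℕ) ∧ (v : ℕ) < n / 2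

/-- Edge probabilities of the nested block instance: `Kp` within `L₁` and within `L₂`,
`p` between `L₁` and `L₂` and within `R`, and `q` between `L = L₁ ∪ L₂` and `R`. -/
def nestedP (n : ℕ) (p q K : ℝ) : Fin n → Fin n → ℝ := fun v w =>
  if (inL1 n v ∧ inL1 n w) ∨ (inL2 n v ∧ inL2 n w) then K * p
  else if inP1 n v ∧ inP1 n w then p
  else if ¬ inP1 n v ∧ ¬ inP1 n w then p
  else q

/-- Misclassification rate of the bipartition `{S, Sᶜ}` with respect to the planted
partition `{P₁, P₂}`: the minimum over the two matchings of the fraction of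
incorrectly assigned vertices. -/
def misclassRate (n : ℕ) (S : Set (Fin n)) : ℝ :=
  ((min (symmDiff S {v : Fin n | inP1 n v}).ncard
        (symmDiff S {v : Fin n | ¬ inP1 n v}).ncard : ℕ) : ℝ) / n

/-!
Write `T = n p` and `g = n q`. With probability at least `1 - 1 / n` the adjacency matrix is its
expectation plus a noise matrix of relative size `η`: the trace method bounds its quadratic form,
and Chernoff bounds control each of its rows against any vector that does not depend on that row.
Everything else is deterministic.

The planted vector `±1` is an eigenvector of the expected unnormalized Laplacian, with eigenvalue
`g`, and all other eigenvalues orthogonal to constants are at least of order `T ≥ 2 g`, so the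
second eigenvector `u` of `L` is close to the planted vector in norm. To recover the sign of `u`
at every vertex `v`, solve the eigenvalue equation at `v` for `u v`. The noise enters through row
`v`, and there `u` is compared with an eigenvector of the Laplacian of the graph without the edges
at `v`, which is independent of row `v`.

For both normalized Laplacians the eigenvalue equation amounts to `L y = λ D y`. Vertices in
`L₁ ∪ L₂` have larger degrees than those in `R`, so here the signed indicator of `{L₁, L₂}` has a
smaller Rayleigh quotient than any vector separating `L₁ ∪ L₂` from `R`. Hence the block averages
of `y` are close to `(a, -a, 0)`, and the sign of `y` cuts `L₁` from `L₂`, which misplaces about a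
quarter of the vertices.
-/

section Spectral

variable {ι : Type*} [Fintype ι] [DecidableEq ι] {M : Matrix ι ι ℝ}

omit [DecidableEq ι] in
theorem isHermitian_mulVec_dotProduct (hM : M.IsHermitian) (x y : ι → ℝ) :
    (M *ᵥ x) ⬝ᵥ y = x ⬝ᵥ M *ᵥ y := by
  rw [dotProduct_mulVec, ← mulVec_transpose, ← conjTranspose_eq_transpose_of_trivial, hM.eq]

/-- The `i`-th vector of Mathlib's orthonormal eigenbasis, as a plain function. -/
def eigvec (hM : M.IsHermitian) (i : ι) : ι → ℝ := hM.eigenvectorBasis i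

theorem mulVec_eigvec (hM : M.IsHermitian) (i : ι) :
    M *ᵥ eigvec hM i = hM.eigenvalues i • eigvec hM i :=
  hM.mulVec_eigenvectorBasis i

theorem eigvec_dotProduct_eigvec (hM : M.IsHermitian) (i j : ι) :
    eigvec hM i ⬝ᵥ eigvec hM j = if i = j then 1 else 0 := by
  rw [← orthonormal_iff_ite.mp hM.eigenvectorBasis.orthonormal i j]
  simp [eigvec, PiLp.inner_apply, dotProduct, mul_comm]

theorem dotProduct_eq_sum_eigvec (hM : M.IsHermitian) (x y : ι → ℝ) :
    x ⬝ᵥ y = ∑ i, (x ⬝ᵥ eigvec hM i) * (y ⬝ᵥ eigvec hM i) := by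
  simpa [eigvec, PiLp.inner_apply, dotProduct, mul_comm] using
    (hM.eigenvectorBasis.sum_inner_mul_inner (WithLp.toLp 2 x) (WithLp.toLp 2 y)).symm

theorem mulVec_dotProduct_eigvec (hM : M.IsHermitian) (x : ι → ℝ) (i : ι) :
    (M *ᵥ x) ⬝ᵥ eigvec hM i = hM.eigenvalues i * (x ⬝ᵥ eigvec hM i) := by
  rw [isHermitian_mulVec_dotProduct hM, mulVec_eigvec, dotProduct_smul, smul_eq_mul]

theorem quadForm_eq_sum_eigvec (hM : M.IsHermitian) (x : ι → ℝ) :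
    x ⬝ᵥ M *ᵥ x = ∑ i, hM.eigenvalues i * (x ⬝ᵥ eigvec hM i) ^ 2 := by
  rw [dotProduct_eq_sum_eigvec hM]
  refine Finset.sum_congr rfl fun i _ => ?_
  rw [mulVec_dotProduct_eigvec]
  ring

theorem trace_pow_eq_sum_eigenvalues_pow (hM : M.IsHermitian) (m : ℕ) :
    (M ^ m).trace = ∑ i, hM.eigenvalues i ^ m := by
  conv_lhs => rw [hM.spectral_theorem, ← map_pow, diagonal_pow, Unitary.conjStarAlgAut_apply,
    trace_mul_cycle, Unitary.coe_star_mul_self, one_mul, trace_diagonal]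
  simp

theorem trace_pow_nonneg_of_even (hM : M.IsHermitian) {m : ℕ} (hm : Even m) :
    0 ≤ (M ^ m).trace := by
  rw [trace_pow_eq_sum_eigenvalues_pow hM]
  exact Finset.sum_nonneg fun i _ => hm.pow_nonneg _

theorem exists_ne_zero_combination_eq_zero (x y : ℝ) :
    ∃ a c : ℝ, 0 < a ^ 2 + c ^ 2 ∧ a * x + c * y = 0 := by
  rcases eq_or_ne x 0 with rfl | hx
  · exact ⟨1, 0, by norm_num, by simp⟩
  · exact ⟨-y, x, by positivity, by ring⟩

theorem exists_eigvec_combination_orthogonal (hM : M.IsHermitian) {i j : ι} (hij : i ≠ j)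
    (f : ι → ℝ) :
    ∃ a c : ℝ, 0 < a ^ 2 + c ^ 2 ∧ ∃ z, z = a • eigvec hM i + c • eigvec hM j ∧ z ⬝ᵥ f = 0 ∧
      z ⬝ᵥ z = a ^ 2 + c ^ 2 ∧
      z ⬝ᵥ M *ᵥ z = hM.eigenvalues i * a ^ 2 + hM.eigenvalues j * c ^ 2 := by
  obtain ⟨a, c, hac, horth⟩ :=
    exists_ne_zero_combination_eq_zero (eigvec hM i ⬝ᵥ f) (eigvec hM j ⬝ᵥ f)
  refine ⟨a, c, hac, _, rfl, by simpa [add_dotProduct] using horth, ?_, ?_⟩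
  · simp [add_dotProduct, dotProduct_add, eigvec_dotProduct_eigvec, hij, hij.symm]
    ring
  · simp [add_dotProduct, dotProduct_add, mulVec_add, mulVec_smul, mulVec_eigvec,
      eigvec_dotProduct_eigvec, hij, hij.symm]
    ring

end Spectral

section SecondEigenvalue

variable {M : Matrix (Fin n) (Fin n) ℝ}

theorem sort_roots_charpoly_eq_ofFn_rev (hM : M.IsHermitian) :
    M.charpoly.roots.sort (· ≤ ·) = List.ofFn (hM.eigenvalues₀ ∘ Fin.rev) := by
  have hroots : M.charpoly.roots = (List.ofFn (hM.eigenvalues₀ ∘ Fin.rev) : Multiset ℝ) := by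
    rw [hM.roots_charpoly_eq_eigenvalues₀, ← Fin.univ_val_map, ← Multiset.map_map _ Fin.rev]
    exact congrArg _ (Multiset.map_univ_val_equiv Fin.revPerm).symm
  rw [hroots, Multiset.coe_sort]
  refine List.mergeSort_of_pairwise ?_
  simp_rw [decide_eq_true_eq, ← List.sortedLE_iff_pairwise]
  exact (hM.eigenvalues₀_antitone.comp Fin.rev_anti).sortedLE_ofFn

theorem exists_eigenvalues_eq_eig_one (hn : 2 ≤ n) (hM : M.IsHermitian) :
    ∃ i j, i ≠ j ∧ hM.eigenvalues i ≤ eig M 1 ∧ hM.eigenvalues j = eig M 1 ∧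
      ∀ k, k ≠ i → eig M 1 ≤ hM.eigenvalues k := by
  have hcard : Fintype.card (Fin n) = n := Fintype.card_fin n
  let e := Fintype.equivOfCardEq (Fintype.card_fin (Fintype.card (Fin n)))
  let r : Fin (Fintype.card (Fin n)) := ⟨0, by omega⟩
  let s : Fin (Fintype.card (Fin n)) := ⟨1, by omega⟩
  have heig : eig M 1 = hM.eigenvalues₀ s.rev := by
    rw [eig, sort_roots_charpoly_eq_ofFn_rev hM, List.getD_eq_getElem _ _ (by simp; omega)]
    simp [s]
  have hval : ∀ k, hM.eigenvalues (e k) = hM.eigenvalues₀ k := fun k => by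
    simp [Matrix.IsHermitian.eigenvalues, e]
  refine ⟨e r.rev, e s.rev, by simp [r, s], ?_, by rw [hval, heig], fun k hk => ?_⟩
  · rw [hval, heig]
    exact hM.eigenvalues₀_antitone (by simp [r, s, Fin.le_def]; omega)
  · obtain ⟨k, rfl⟩ := e.surjective k
    rw [hval, heig]
    refine hM.eigenvalues₀_antitone ?_
    have hkr : k ≠ r.rev := fun h => hk (by rw [h])
    simp [r, s, Fin.le_def, Fin.ext_iff] at hkr ⊢
    omega

theorem eig_one_le_of_form_le (hn : 2 ≤ n) (hM : M.IsHermitian) {t : ℝ} (f g : Fin n → ℝ)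
    (hfg : ∀ a c : ℝ, a • f + c • g = 0 → a = 0 ∧ c = 0)
    (hle : ∀ a c : ℝ, (a • f + c • g) ⬝ᵥ M *ᵥ (a • f + c • g) ≤
      t * ((a • f + c • g) ⬝ᵥ (a • f + c • g))) :
    eig M 1 ≤ t := by
  obtain ⟨i, -, -, -, -, hrest⟩ := exists_eigenvalues_eq_eig_one hn hM
  obtain ⟨a, c, hac, h0⟩ :=
    exists_ne_zero_combination_eq_zero (f ⬝ᵥ eigvec hM i) (g ⬝ᵥ eigvec hM i)
  set z := a • f + c • g with hz
  have horth : z ⬝ᵥ eigvec hM i = 0 := by simpa [hz, add_dotProduct] using h0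
  have hpos : 0 < z ⬝ᵥ z := by
    refine (dotProduct_star_self_pos_iff (v := z)).mpr fun hz0 => ?_
    obtain ⟨rfl, rfl⟩ := hfg a c hz0
    norm_num at hac
  refine le_of_mul_le_mul_right (le_trans ?_ (hle a c)) hpos
  rw [quadForm_eq_sum_eigvec hM, dotProduct_eq_sum_eigvec hM z z, Finset.mul_sum]
  refine Finset.sum_le_sum fun k _ => ?_
  rw [← sq]
  rcases eq_or_ne k i with rfl | hk
  · rw [horth]
    simp
  · exact mul_le_mul_of_nonneg_right (hrest k hk) (sq_nonneg _)

theorem le_eig_one_of_le_form (hn : 2 ≤ n) (hM : M.IsHermitian) {t : ℝ} (f : Fin n → ℝ)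
    (hle : ∀ z, z ⬝ᵥ f = 0 → t * (z ⬝ᵥ z) ≤ z ⬝ᵥ M *ᵥ z) : t ≤ eig M 1 := by
  obtain ⟨i, j, hij, hi, hj, -⟩ := exists_eigenvalues_eq_eig_one hn hM
  obtain ⟨a, c, hac, z, -, horth, hself, hform⟩ := exists_eigvec_combination_orthogonal hM hij f
  refine le_of_mul_le_mul_right ?_ hac
  calc t * (a ^ 2 + c ^ 2) ≤ hM.eigenvalues i * a ^ 2 + hM.eigenvalues j * c ^ 2 := by
        rw [← hself, ← hform]; exact hle z horth
    _ ≤ eig M 1 * (a ^ 2 + c ^ 2) := by rw [hj]; nlinarith [sq_nonneg a]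

end SecondEigenvalue

section EuclideanNorm

theorem l2_eq_norm (x : Fin n → ℝ) : l2 x = ‖WithLp.toLp 2 x‖ := by
  simp [l2, EuclideanSpace.norm_eq]

theorem l2_nonneg (x : Fin n → ℝ) : 0 ≤ l2 x := Real.sqrt_nonneg _

theorem l2_sq (x : Fin n → ℝ) : l2 x ^ 2 = x ⬝ᵥ x := by
  rw [l2, Real.sq_sqrt (Finset.sum_nonneg fun _ _ => sq_nonneg _)]
  exact Finset.sum_congr rfl fun _ _ => sq _

theorem l2_smul (a : ℝ) (x : Fin n → ℝ) : l2 (a • x) = |a| * l2 x := by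
  rw [l2_eq_norm, l2_eq_norm, WithLp.toLp_smul, norm_smul, Real.norm_eq_abs]

theorem abs_dotProduct_le_l2_mul_l2 (x y : Fin n → ℝ) : |x ⬝ᵥ y| ≤ l2 x * l2 y := by
  rw [l2_eq_norm, l2_eq_norm]
  simpa [PiLp.inner_apply, dotProduct, mul_comm] using
    abs_real_inner_le_norm (WithLp.toLp 2 x) (WithLp.toLp 2 y)

theorem norm_le_l2 (x : Fin n → ℝ) : ‖x‖ ≤ l2 x := by
  rw [l2_eq_norm]
  exact (pi_norm_le_iff_of_nonneg (norm_nonneg _)).mpr (PiLp.norm_apply_le (WithLp.toLp 2 x))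

theorem l2_le_of_dotProduct_self_le {x : Fin n → ℝ} {t : ℝ} (ht : 0 ≤ t) (h : x ⬝ᵥ x ≤ t ^ 2) :
    l2 x ≤ t :=
  abs_le_of_sq_le_sq' (by rwa [l2_sq]) ht |>.2

variable {M : Matrix (Fin n) (Fin n) ℝ}

theorem l2_sq_eq_sum_eigvec (hM : M.IsHermitian) (x : Fin n → ℝ) :
    l2 x ^ 2 = ∑ i, (x ⬝ᵥ eigvec hM i) ^ 2 := by
  rw [l2_sq, dotProduct_eq_sum_eigvec hM]
  simp only [sq]

theorem abs_dotProduct_mulVec_le_of_trace_pow_le (hM : M.IsHermitian) {k : ℕ} (hk : k ≠ 0) {t : ℝ}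
    (ht : 0 ≤ t) (htrace : (M ^ (2 * k)).trace ≤ t ^ (2 * k)) (x y : Fin n → ℝ) :
    |x ⬝ᵥ M *ᵥ y| ≤ t * (l2 x * l2 y) := by
  have heig : ∀ i, hM.eigenvalues i ^ 2 ≤ t ^ 2 := by
    intro i
    rw [trace_pow_eq_sum_eigenvalues_pow hM] at htrace
    have hpow := (Finset.single_le_sum (f := fun i => hM.eigenvalues i ^ (2 * k))
      (fun i _ => (even_two_mul k).pow_nonneg _) (Finset.mem_univ i)).trans htrace
    rw [pow_mul, pow_mul] at hpow
    exact (pow_le_pow_iff_left₀ (sq_nonneg _) (sq_nonneg _) hk).mp hpow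
  have hMy : l2 (M *ᵥ y) ≤ t * l2 y := by
    refine l2_le_of_dotProduct_self_le (mul_nonneg ht (l2_nonneg _)) ?_
    rw [← l2_sq, l2_sq_eq_sum_eigvec hM, mul_pow, l2_sq_eq_sum_eigvec hM, Finset.mul_sum]
    refine Finset.sum_le_sum fun i _ => ?_
    rw [mulVec_dotProduct_eigvec, mul_pow]
    exact mul_le_mul_of_nonneg_right (heig i) (sq_nonneg _)
  calc |x ⬝ᵥ M *ᵥ y| ≤ l2 x * l2 (M *ᵥ y) := abs_dotProduct_le_l2_mul_l2 _ _
    _ ≤ l2 x * (t * l2 y) := mul_le_mul_of_nonneg_left hMy (l2_nonneg _)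
    _ = t * (l2 x * l2 y) := by ring

/-- Every approximate eigenvector of `M` with approximate eigenvalue within `ρ / 2` of `g` is close
to a multiple of `y`; the leave-one-out argument needs only this much of an eigenvector. -/
def CapturesNear (M : Matrix (Fin n) (Fin n) ℝ) (g ρ : ℝ) (y : Fin n → ℝ) : Prop :=
  ∀ t : ℝ, |t - g| ≤ ρ / 2 → ∀ x : Fin n → ℝ, ∃ a : ℝ,
    ρ / 2 * l2 (x - a • y) ≤ l2 (M *ᵥ x - t • x)

/-- The orthogonal projection of `x` to the line of `y` is taken; its error has no component along
the eigenvectors with eigenvalue near `g`, and `M - t` expands all others by at least `ρ / 2`. -/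
theorem exists_capturesNear (hM : M.IsHermitian) {g ρ : ℝ} (hρ : 0 < ρ)
    (huniq : {i | |hM.eigenvalues i - g| < ρ}.Subsingleton) : ∃ y, CapturesNear M g ρ y := by
  obtain ⟨y, hy, hy'⟩ : ∃ y, (∀ i, |hM.eigenvalues i - g| < ρ → y = eigvec hM i) ∧
      ∀ i, ρ ≤ |hM.eigenvalues i - g| → y ⬝ᵥ eigvec hM i = 0 := by
    rcases huniq.eq_empty_or_singleton with hS | ⟨j, hS⟩
    · exact ⟨0, fun i hi => (Set.eq_empty_iff_forall_notMem.mp hS i hi).elim, by simp⟩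
    · have hmem : ∀ i, |hM.eigenvalues i - g| < ρ ↔ i = j := Set.ext_iff.mp hS
      refine ⟨eigvec hM j, fun i hi => by rw [(hmem i).mp hi], fun i hi => ?_⟩
      rw [eigvec_dotProduct_eigvec, if_neg]
      exact fun hji => hi.not_gt ((hmem i).mpr hji.symm)
  refine ⟨y, fun t ht x => ⟨x ⬝ᵥ y, (abs_le_of_sq_le_sq' ?_ (l2_nonneg _)).2⟩⟩
  rw [mul_pow, l2_sq_eq_sum_eigvec hM, l2_sq_eq_sum_eigvec hM, Finset.mul_sum]
  refine Finset.sum_le_sum fun i _ => ?_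
  have hresidual : (M *ᵥ x - t • x) ⬝ᵥ eigvec hM i =
      (hM.eigenvalues i - t) * (x ⬝ᵥ eigvec hM i) := by
    rw [sub_dotProduct, mulVec_dotProduct_eigvec, smul_dotProduct, smul_eq_mul, sub_mul]
  rw [hresidual, mul_pow]
  rcases lt_or_ge |hM.eigenvalues i - g| ρ with hi | hi
  · simp only [hy i hi, sub_dotProduct, smul_dotProduct, eigvec_dotProduct_eigvec, if_true,
      smul_eq_mul, mul_one, sub_self, sq, mul_zero]
    exact mul_nonneg (mul_self_nonneg _) (mul_self_nonneg _)
  · simp only [sub_dotProduct, smul_dotProduct, hy' i hi, smul_zero, sub_zero]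
    refine mul_le_mul_of_nonneg_right ?_ (sq_nonneg _)
    rw [← sq_abs (hM.eigenvalues i - t)]
    have htri := abs_sub_le (hM.eigenvalues i) t g
    exact pow_le_pow_left₀ (by positivity) (by linarith) 2

end EuclideanNorm

section EdgePairs

/-- The pairs `v < w`, over which the product in `IsEdgeProduct` runs. -/
def edgePairs (n : ℕ) : Finset (Fin n × Fin n) :=
  Finset.univ.filter fun e : Fin n × Fin n => e.1 < e.2

theorem mem_edgePairs {e : Fin n × Fin n} : e ∈ edgePairs n ↔ e.1 < e.2 := by
  simp [edgePairs]

/-- The pair `{u, w}` in increasing order. -/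
def sortedPair (u w : Fin n) : Fin n × Fin n := (min u w, max u w)

theorem sortedPair_mem_edgePairs {u w : Fin n} (h : u ≠ w) : sortedPair u w ∈ edgePairs n :=
  mem_edgePairs.mpr (min_lt_max.mpr h)

theorem sortedPair_cases (u w : Fin n) : sortedPair u w = (u, w) ∨ sortedPair u w = (w, u) := by
  rcases le_total u w with h | h <;> simp [sortedPair, h]

theorem sortedPair_injective (u : Fin n) : Function.Injective (sortedPair u) := by
  intro w w' h
  rcases sortedPair_cases u w with hw | hw <;> rcases sortedPair_cases u w' with hw' | hw' <;>
    simp_all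

theorem prod_erase_eq_prod_edgePairs (v : Fin n) (φ : Fin n → ℝ) :
    ∏ w ∈ Finset.univ.erase v, φ w =
      ∏ e ∈ edgePairs n, if e.1 = v then φ e.2 else if e.2 = v then φ e.1 else 1 := by
  have hmem : (Finset.univ.erase v).image (sortedPair v) ⊆ edgePairs n := by
    intro e he
    obtain ⟨w, hw, rfl⟩ := Finset.mem_image.mp he
    exact sortedPair_mem_edgePairs (Finset.ne_of_mem_erase hw).symm
  rw [← Finset.prod_subset hmem, Finset.prod_image (sortedPair_injective v).injOn]
  · refine Finset.prod_congr rfl fun w hw => ?_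
    rcases sortedPair_cases v w with h | h <;> simp [h, Finset.ne_of_mem_erase hw]
  · intro e he hnot
    have hlt := mem_edgePairs.mp he
    have h₁ : e.1 ≠ v := by
      rintro rfl
      exact hnot (Finset.mem_image.mpr ⟨e.2, by simp [hlt.ne'], by simp [sortedPair, hlt.le]⟩)
    have h₂ : e.2 ≠ v := by
      rintro rfl
      exact hnot (Finset.mem_image.mpr ⟨e.1, by simp [hlt.ne], by simp [sortedPair, hlt.le]⟩)
    simp [h₁, h₂]

theorem sum_prod_edgePairs (F : Fin n × Fin n → Prop → ℝ) :
    ∑ G : SimpleGraph (Fin n), ∏ e ∈ edgePairs n, F e (G.Adj e.1 e.2) =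
      ∏ e ∈ edgePairs n, (F e True + F e False) := by
  rw [Finset.prod_add]
  refine Finset.sum_bij' (fun G _ => (edgePairs n).filter fun e => G.Adj e.1 e.2)
    (fun t _ => SimpleGraph.fromRel fun v w => (v, w) ∈ t) ?_ ?_ ?_ ?_ ?_
  · exact fun G _ => Finset.mem_powerset.mpr (Finset.filter_subset _ _)
  · simp
  · intro G _
    ext v w
    rcases lt_trichotomy v w with h | h | h
    · simp [mem_edgePairs, h, h.ne, h.not_gt]
    · simp [h]
    · simp [mem_edgePairs, h, h.ne', h.not_gt, G.adj_comm]
  · intro t ht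
    have hlt : ∀ e ∈ t, e.1 < e.2 := fun e he => mem_edgePairs.mp (Finset.mem_powerset.mp ht he)
    ext e
    simp only [Finset.mem_filter, mem_edgePairs, SimpleGraph.fromRel_adj]
    constructor
    · rintro ⟨h, -, h' | h'⟩
      · exact h'
      · exact absurd (hlt _ h') h.not_gt
    · exact fun h => ⟨hlt e h, (hlt e h).ne, Or.inl h⟩
  · intro G _
    rw [← Finset.filter_not, ← Finset.prod_filter_mul_prod_filter_not _ fun e => G.Adj e.1 e.2]
    congr 1 <;> exact Finset.prod_congr rfl fun e he => by simp [(Finset.mem_filter.mp he).2]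

end EdgePairs

section RandomGraph

/-- An array of edge probabilities: symmetric, with entries in `[0, 1]`. -/
structure IsEdgeProbability (P : Fin n → Fin n → ℝ) : Prop where
  comm : ∀ v w, P v w = P w v
  nonneg : ∀ v w, 0 ≤ P v w
  le_one : ∀ v w, P v w ≤ 1

instance : DiscreteMeasurableSpace (SimpleGraph (Fin n)) := ⟨fun _ => trivial⟩

variable {P : Fin n → Fin n → ℝ} {μ : PMF (SimpleGraph (Fin n))}

theorem IsEdgeProduct.integral_prod (hμ : IsEdgeProduct P μ) (hP : IsEdgeProbability P)
    (F : Fin n × Fin n → Prop → ℝ) :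
    ∫ G, ∏ e ∈ edgePairs n, F e (G.Adj e.1 e.2) ∂μ.toMeasure =
      ∏ e ∈ edgePairs n, (P e.1 e.2 * F e True + (1 - P e.1 e.2) * F e False) := by
  have hsum := sum_prod_edgePairs fun e s => (if s then P e.1 e.2 else 1 - P e.1 e.2) * F e s
  simp only [if_true, if_false] at hsum
  rw [PMF.integral_eq_sum, ← hsum]
  refine Finset.sum_congr rfl fun G _ => ?_
  rw [hμ G, ENNReal.toReal_prod, ← edgePairs, smul_eq_mul, ← Finset.prod_mul_distrib]
  refine Finset.prod_congr rfl fun e _ => ?_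
  split_ifs
  · rw [ENNReal.toReal_ofReal (hP.nonneg _ _)]
  · rw [ENNReal.toReal_ofReal (sub_nonneg.mpr (hP.le_one _ _))]

theorem IsEdgeProduct.integral_prod_mul_prod (hμ : IsEdgeProduct P μ) (hP : IsEdgeProbability P)
    {A B : Fin n × Fin n → Prop → ℝ} (h : ∀ e, (∀ s, A e s = 1) ∨ ∀ s, B e s = 1) :
    ∫ G, (∏ e ∈ edgePairs n, A e (G.Adj e.1 e.2)) *
        ∏ e ∈ edgePairs n, B e (G.Adj e.1 e.2) ∂μ.toMeasure =
      (∫ G, ∏ e ∈ edgePairs n, A e (G.Adj e.1 e.2) ∂μ.toMeasure) *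
        ∏ e ∈ edgePairs n, (P e.1 e.2 * B e True + (1 - P e.1 e.2) * B e False) := by
  simp only [← Finset.prod_mul_distrib]
  rw [hμ.integral_prod hP fun e s => A e s * B e s, hμ.integral_prod hP,
    ← Finset.prod_mul_distrib]
  refine Finset.prod_congr rfl fun e _ => ?_
  rcases h e with h | h <;> simp only [h] <;> ring

theorem one_sub_le_toMeasure_of_real_compl_le {S : Set (SimpleGraph (Fin n))}
    (h : μ.toMeasure.real Sᶜ ≤ 1 / n) : 1 - 1 / (n : ℝ≥0∞) ≤ μ.toMeasure S := by
  rcases Nat.eq_zero_or_pos n with rfl | hn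
  · simp
  rw [← compl_compl S, prob_compl_eq_one_sub (MeasurableSet.of_discrete (s := Sᶜ)),
    ← ofReal_measureReal]
  refine tsub_le_tsub_left ((ENNReal.ofReal_le_ofReal h).trans_eq ?_) 1
  rw [ENNReal.ofReal_div_of_pos (by exact_mod_cast hn), ENNReal.ofReal_one,
    ENNReal.ofReal_natCast]

end RandomGraph

section CentredAdjacency

/-- The centred adjacency matrix `A − 𝔼A` of a random graph with edge probabilities `P`. -/
def centred (P : Fin n → Fin n → ℝ) (G : SimpleGraph (Fin n)) : Matrix (Fin n) (Fin n) ℝ :=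
  adjM G - offP P

variable {P : Fin n → Fin n → ℝ} {μ : PMF (SimpleGraph (Fin n))}

@[simp]
theorem centred_self (P : Fin n → Fin n → ℝ) (G : SimpleGraph (Fin n)) (v : Fin n) :
    centred P G v v = 0 := by
  simp [centred, adjM, offP]

theorem centred_apply (P : Fin n → Fin n → ℝ) (G : SimpleGraph (Fin n)) {v w : Fin n}
    (h : v ≠ w) : centred P G v w = (if G.Adj v w then 1 else 0) - P v w := by
  simp [centred, adjM, offP, h]

theorem centred_comm (hP : IsEdgeProbability P) (G : SimpleGraph (Fin n)) (v w : Fin n) :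
    centred P G v w = centred P G w v := by
  rcases eq_or_ne v w with rfl | h
  · rfl
  · rw [centred_apply P G h, centred_apply P G h.symm, G.adj_comm, hP.comm]

theorem isHermitian_centred (hP : IsEdgeProbability P) (G : SimpleGraph (Fin n)) :
    (centred P G).IsHermitian :=
  Matrix.IsHermitian.ext fun v w => centred_comm hP G w v

end CentredAdjacency

section LeaveOneOut

variable {P : Fin n → Fin n → ℝ} {μ : PMF (SimpleGraph (Fin n))}

/-- The graph `G` with all edges at `v` deleted. It is independent of the edges at `v`, which is
what makes leave-one-out arguments work. -/
def isolate (G : SimpleGraph (Fin n)) (v : Fin n) : SimpleGraph (Fin n) where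
  Adj a b := G.Adj a b ∧ a ≠ v ∧ b ≠ v
  symm := ⟨fun _ _ h => ⟨h.1.symm, h.2.2, h.2.1⟩⟩
  loopless := ⟨fun a h => G.loopless.irrefl a h.1⟩

theorem isolate_eq_iff {G H : SimpleGraph (Fin n)} {v : Fin n} (hH : ∀ w, ¬ H.Adj v w) :
    isolate G v = H ↔
      ∀ e ∈ edgePairs n, e.1 = v ∨ e.2 = v ∨ (H.Adj e.1 e.2 ↔ G.Adj e.1 e.2) := by
  constructor
  · rintro rfl e -
    simp only [isolate]
    tauto
  · intro h
    have hH' : ∀ w, ¬ H.Adj w v := fun w hw => hH w hw.symm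
    have agree : ∀ a b, a < b → ((isolate G v).Adj a b ↔ H.Adj a b) := by
      intro a b hab
      rcases h (a, b) (mem_edgePairs.mpr hab) with rfl | rfl | hadj
      · simp [isolate, hH]
      · simp [isolate, hH']
      · rcases eq_or_ne a v with rfl | ha
        · simp [isolate, hH]
        rcases eq_or_ne b v with rfl | hb
        · simp [isolate, hH']
        · simp [isolate, ha, hb, hadj]
    ext a b
    rcases lt_trichotomy a b with hab | rfl | hab
    · exact agree a b hab
    · simp
    · rw [SimpleGraph.adj_comm, H.adj_comm, agree b a hab]

theorem IsEdgeProduct.integral_prod_row_of_isolate_eq (hμ : IsEdgeProduct P μ)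
    (hP : IsEdgeProbability P) (v : Fin n) (H : SimpleGraph (Fin n)) (F : Fin n → Prop → ℝ) :
    ∫ G, (if isolate G v = H then 1 else 0) *
        ∏ w ∈ Finset.univ.erase v, F w (G.Adj v w) ∂μ.toMeasure =
      (∫ G, if isolate G v = H then 1 else 0 ∂μ.toMeasure) *
        ∏ w ∈ Finset.univ.erase v, (P v w * F w True + (1 - P v w) * F w False) := by
  by_cases hH : ∀ w, ¬ H.Adj v w
  swap
  · have hne : ∀ G, isolate G v ≠ H := by
      rintro G rfl
      exact hH fun w hw => hw.2.1 rfl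
    simp [hne]
  have hind : ∀ G, (if isolate G v = H then (1 : ℝ) else 0) = ∏ e ∈ edgePairs n,
      if e.1 = v ∨ e.2 = v ∨ (H.Adj e.1 e.2 ↔ G.Adj e.1 e.2) then 1 else 0 := fun G => by
    simp only [isolate_eq_iff hH, Finset.prod_boole]
    congr
  simp only [hind, prod_erase_eq_prod_edgePairs]
  have key := hμ.integral_prod_mul_prod hP
    (A := fun e s => if e.1 = v ∨ e.2 = v ∨ (H.Adj e.1 e.2 ↔ s) then 1 else 0)
    (B := fun e s => if e.1 = v then F e.2 s else if e.2 = v then F e.1 s else 1)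
    fun e => by by_cases h₁ : e.1 = v <;> by_cases h₂ : e.2 = v <;> simp [h₁, h₂]
  convert key using 5 with G e _ e _
  · split_ifs with h₁ h₂
    · rw [h₁]
    · rw [h₂, G.adj_comm]
    · rfl
  · split_ifs with h₁ h₂
    · rw [h₁]
    · rw [h₂, hP.comm]
    · ring

theorem IsEdgeProduct.integral_prod_row (hμ : IsEdgeProduct P μ) (hP : IsEdgeProbability P)
    (v : Fin n) (F : SimpleGraph (Fin n) → Fin n → Prop → ℝ) :
    ∫ G, ∏ w ∈ Finset.univ.erase v, F (isolate G v) w (G.Adj v w) ∂μ.toMeasure =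
      ∫ G, ∏ w ∈ Finset.univ.erase v, (P v w * F (isolate G v) w True +
        (1 - P v w) * F (isolate G v) w False) ∂μ.toMeasure := by
  have split : ∀ φ : SimpleGraph (Fin n) → SimpleGraph (Fin n) → ℝ,
      ∫ G, φ (isolate G v) G ∂μ.toMeasure =
        ∑ H, ∫ G, (if isolate G v = H then 1 else 0) * φ H G ∂μ.toMeasure := fun φ => by
    rw [← integral_finsetSum _ fun _ _ => .of_finite]
    simp
  rw [split fun H G => ∏ w ∈ Finset.univ.erase v, F H w (G.Adj v w),
    split fun H _ => ∏ w ∈ Finset.univ.erase v, (P v w * F H w True + (1 - P v w) * F H w False)]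
  simp only [hμ.integral_prod_row_of_isolate_eq hP, integral_mul_const]

theorem bernoulli_mgf_le {p y : ℝ} (hp₀ : 0 ≤ p) (hp₁ : p ≤ 1) (hy : |y| ≤ 1) :
    p * Real.exp (y * (1 - p)) + (1 - p) * Real.exp (y * (0 - p)) ≤ Real.exp (y ^ 2 * p) := by
  have exp_le : ∀ z, |z| ≤ 1 → Real.exp (y * z) ≤ 1 + y * z + (y * z) ^ 2 := fun z hz => by
    have := Real.abs_exp_sub_one_sub_id_le (x := y * z)
      (by rw [abs_mul]; exact mul_le_one₀ hy (abs_nonneg _) hz)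
    linarith [(abs_le.mp this).2]
  calc p * Real.exp (y * (1 - p)) + (1 - p) * Real.exp (y * (0 - p))
      ≤ p * (1 + y * (1 - p) + (y * (1 - p)) ^ 2) +
        (1 - p) * (1 + y * (0 - p) + (y * (0 - p)) ^ 2) :=
        add_le_add
          (mul_le_mul_of_nonneg_left (exp_le _ (abs_le.mpr (by constructor <;> linarith))) hp₀)
          (mul_le_mul_of_nonneg_left (exp_le _ (abs_le.mpr (by constructor <;> linarith)))
            (sub_nonneg.mpr hp₁))
    _ ≤ y ^ 2 * p + 1 := by nlinarith [mul_nonneg (sq_nonneg y) (sq_nonneg p)]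
    _ ≤ Real.exp (y ^ 2 * p) := Real.add_one_le_exp _

theorem IsEdgeProduct.integral_exp_row_le (hμ : IsEdgeProduct P μ) (hP : IsEdgeProbability P)
    {θ : ℝ} (hθ : |θ| ≤ 1) (v : Fin n) {x : SimpleGraph (Fin n) → Fin n → ℝ}
    (hx : ∀ H w, |x H w| ≤ 1) :
    ∫ G, Real.exp (θ * ∑ w, centred P G v w * x (isolate G v) w) ∂μ.toMeasure ≤
      Real.exp (θ ^ 2 * ∑ w, P v w) := by
  have hprod : ∀ G, Real.exp (θ * ∑ w, centred P G v w * x (isolate G v) w) =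
      ∏ w ∈ Finset.univ.erase v, Real.exp (θ * x (isolate G v) w *
        ((if G.Adj v w then 1 else 0) - P v w)) := fun G => by
    rw [← Finset.sum_erase Finset.univ (a := v) (by simp), Finset.mul_sum, Real.exp_sum]
    refine Finset.prod_congr rfl fun w hw => ?_
    rw [centred_apply P G (Finset.ne_of_mem_erase hw).symm]
    ring_nf
  simp only [hprod]
  rw [hμ.integral_prod_row hP v fun H w s =>
    Real.exp (θ * x H w * ((if s then 1 else 0) - P v w))]
  have factor_le : ∀ H w, P v w * Real.exp (θ * x H w * (1 - P v w)) +
      (1 - P v w) * Real.exp (θ * x H w * (0 - P v w)) ≤ Real.exp (θ ^ 2 * P v w) := by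
    intro H w
    refine (bernoulli_mgf_le (hP.nonneg v w) (hP.le_one v w) ?_).trans (Real.exp_le_exp.mpr ?_)
    · rw [abs_mul]
      exact mul_le_one₀ hθ (abs_nonneg _) (hx H w)
    · refine mul_le_mul_of_nonneg_right ?_ (hP.nonneg v w)
      rw [mul_pow]
      exact mul_le_of_le_one_right (sq_nonneg θ) ((sq_le_one_iff_abs_le_one _).mpr (hx H w))
  calc _ ≤ ∫ _G, ∏ w ∈ Finset.univ.erase v, Real.exp (θ ^ 2 * P v w) ∂μ.toMeasure := by
        refine integral_mono .of_finite .of_finite fun G => Finset.prod_le_prod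
          (fun w _ => ?_) fun w _ => by simpa using factor_le (isolate G v) w
        have := hP.nonneg v w
        have := sub_nonneg.mpr (hP.le_one v w)
        positivity
    _ = Real.exp (θ ^ 2 * ∑ w ∈ Finset.univ.erase v, P v w) := by
        simp only [← Real.exp_sum, ← Finset.mul_sum, integral_const, probReal_univ, one_smul]
    _ ≤ Real.exp (θ ^ 2 * ∑ w, P v w) := by
        refine Real.exp_le_exp.mpr (mul_le_mul_of_nonneg_left ?_ (sq_nonneg θ))
        exact Finset.sum_le_sum_of_subset_of_nonneg (Finset.erase_subset _ _)
          fun w _ _ => hP.nonneg v w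

theorem IsEdgeProduct.real_le_row_le (hμ : IsEdgeProduct P μ) (hP : IsEdgeProbability P)
    {θ : ℝ} (hθ₀ : 0 ≤ θ) (hθ₁ : θ ≤ 1) (v : Fin n) {B : ℝ} (hB : ∑ w, P v w ≤ B)
    {x : SimpleGraph (Fin n) → Fin n → ℝ} (hx : ∀ H w, |x H w| ≤ 1) (t : ℝ) :
    μ.toMeasure.real {G | t ≤ ∑ w, centred P G v w * x (isolate G v) w} ≤
      Real.exp (θ ^ 2 * B - θ * t) :=
  calc _ ≤ Real.exp (-θ * t) *
          ∫ G, Real.exp (θ * ∑ w, centred P G v w * x (isolate G v) w) ∂μ.toMeasure :=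
        ProbabilityTheory.measure_ge_le_exp_mul_mgf t hθ₀ .of_finite
    _ ≤ Real.exp (-θ * t) * Real.exp (θ ^ 2 * ∑ w, P v w) :=
        mul_le_mul_of_nonneg_left
          (hμ.integral_exp_row_le hP (by rwa [abs_of_nonneg hθ₀]) v hx) (Real.exp_pos _).le
    _ ≤ Real.exp (-θ * t) * Real.exp (θ ^ 2 * B) := by gcongr
    _ = Real.exp (θ ^ 2 * B - θ * t) := by rw [← Real.exp_add]; ring_nf

theorem IsEdgeProduct.real_lt_abs_row_le (hμ : IsEdgeProduct P μ) (hP : IsEdgeProbability P)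
    {θ : ℝ} (hθ₀ : 0 ≤ θ) (hθ₁ : θ ≤ 1) (v : Fin n) {B : ℝ} (hB : ∑ w, P v w ≤ B)
    (x : SimpleGraph (Fin n) → Fin n → ℝ) (t : ℝ) :
    μ.toMeasure.real
        {G | t * ‖x (isolate G v)‖ < |∑ w, centred P G v w * x (isolate G v) w|} ≤
      2 * Real.exp (θ ^ 2 * B - θ * t) := by
  set y : SimpleGraph (Fin n) → Fin n → ℝ := fun H => ‖x H‖⁻¹ • x H with hy
  have hy_le : ∀ H w, |y H w| ≤ 1 := fun H w => by
    refine (norm_le_pi_norm (y H) w).trans ?_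
    rw [hy, norm_smul, norm_inv, norm_norm]
    exact inv_mul_le_one
  have hneg_le : ∀ H w, |(-y) H w| ≤ 1 := fun H w => by simpa using hy_le H w
  have hsub : {G | t * ‖x (isolate G v)‖ < |∑ w, centred P G v w * x (isolate G v) w|} ⊆
      {G | t ≤ ∑ w, centred P G v w * y (isolate G v) w} ∪
        {G | t ≤ ∑ w, centred P G v w * (-y) (isolate G v) w} := by
    intro G (hG : t * ‖x (isolate G v)‖ < |∑ w, centred P G v w * x (isolate G v) w|)
    have hpos : 0 < ‖x (isolate G v)‖ := by
      refine norm_pos_iff.mpr fun h => ?_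
      simp [h] at hG
    have hscale : ∑ w, centred P G v w * y (isolate G v) w =
        ‖x (isolate G v)‖⁻¹ * ∑ w, centred P G v w * x (isolate G v) w := by
      simp only [hy, Pi.smul_apply, smul_eq_mul, Finset.mul_sum, mul_left_comm]
    have hlt : t < |∑ w, centred P G v w * y (isolate G v) w| := by
      rwa [hscale, abs_mul, abs_inv, abs_norm, lt_inv_mul_iff₀ hpos, mul_comm]
    refine (lt_abs.mp hlt).imp le_of_lt fun h => ?_
    simpa using h.le
  calc _ ≤ _ := measureReal_mono hsub
    _ ≤ _ := measureReal_union_le _ _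
    _ ≤ _ := add_le_add (hμ.real_le_row_le hP hθ₀ hθ₁ v hB hy_le t)
        (hμ.real_le_row_le hP hθ₀ hθ₁ v hB hneg_le t)
    _ = _ := (two_mul _).symm

end LeaveOneOut

section TraceMoments

variable {P : Fin n → Fin n → ℝ} {μ : PMF (SimpleGraph (Fin n))}

/-- The monomial with exponents `c` in the entries of the centred adjacency matrix. -/
def monomial (P : Fin n → Fin n → ℝ) (c : Fin n × Fin n → ℕ) (G : SimpleGraph (Fin n)) : ℝ :=
  ∏ e ∈ edgePairs n, centred P G e.1 e.2 ^ c e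

/-- A bound for the `k`-th moment of an entry of the centred adjacency matrix when the edge
probabilities are at most `s ^ 2 * a` and `1 ≤ s`. -/
def momentBound (s a : ℝ) (k : ℕ) : ℝ := if k = 0 then 1 else s ^ k * a

theorem momentBound_nonneg {s a : ℝ} (hs : 0 ≤ s) (ha : 0 ≤ a) (k : ℕ) :
    0 ≤ momentBound s a k := by
  unfold momentBound
  split_ifs <;> positivity

theorem momentBound_succ (s a : ℝ) (k : ℕ) :
    momentBound s a (k + 1) = momentBound s a k * (s * if k = 0 then a else 1) := by
  by_cases h : k = 0
  · simp [momentBound, h]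
  · simp only [momentBound, Nat.succ_ne_zero, h, if_false, pow_succ]
    ring

theorem abs_bernoulli_moment_le {p s a : ℝ} (hp₀ : 0 ≤ p) (hp₁ : p ≤ 1) (hs : 1 ≤ s)
    (ha : 0 ≤ a) (hpa : p ≤ s ^ 2 * a) (k : ℕ) :
    |p * (1 - p) ^ k + (1 - p) * (0 - p) ^ k| ≤ momentBound s a k := by
  have hq₀ : 0 ≤ 1 - p := sub_nonneg.mpr hp₁
  rw [zero_sub]
  rcases k with _ | _ | k
  · simp [momentBound]
  · have hmean : p * (1 - p) ^ 1 + (1 - p) * (-p) ^ 1 = 0 := by ring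
    rw [zero_add, hmean, abs_zero]
    exact momentBound_nonneg (by linarith) ha _
  · calc |p * (1 - p) ^ (k + 2) + (1 - p) * (-p) ^ (k + 2)|
        ≤ |p * (1 - p) ^ (k + 2)| + |(1 - p) * (-p) ^ (k + 2)| := abs_add_le _ _
      _ = p * (1 - p) ^ (k + 2) + (1 - p) * p ^ (k + 2) := by
          rw [abs_mul, abs_mul, abs_pow, abs_pow, abs_neg, abs_of_nonneg hp₀, abs_of_nonneg hq₀]
      _ ≤ p * (1 - p) ^ 2 + (1 - p) * p ^ 2 := by
          gcongr ?_ * ?_ + ?_ * ?_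
          · exact pow_le_pow_of_le_one hq₀ (by linarith) (by omega)
          · exact pow_le_pow_of_le_one hp₀ hp₁ (by omega)
      _ ≤ s ^ 2 * a := by nlinarith
      _ ≤ s ^ (k + 2) * a := by gcongr; omega
      _ = momentBound s a (k + 2) := by simp [momentBound]

theorem IsEdgeProduct.abs_integral_monomial_le (hμ : IsEdgeProduct P μ)
    (hP : IsEdgeProbability P) {s a : ℝ} (hs : 1 ≤ s) (ha : 0 ≤ a)
    (hPa : ∀ v w, P v w ≤ s ^ 2 * a) (c : Fin n × Fin n → ℕ) :
    |∫ G, monomial P c G ∂μ.toMeasure| ≤ ∏ e ∈ edgePairs n, momentBound s a (c e) := by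
  have hprod : ∀ G, monomial P c G =
      ∏ e ∈ edgePairs n, ((if G.Adj e.1 e.2 then 1 else 0) - P e.1 e.2) ^ c e := fun G =>
    Finset.prod_congr rfl fun e he => by rw [centred_apply P G (mem_edgePairs.mp he).ne]
  simp only [hprod]
  rw [hμ.integral_prod hP fun e s => ((if s then 1 else 0) - P e.1 e.2) ^ c e, Finset.abs_prod]
  refine Finset.prod_le_prod (fun _ _ => abs_nonneg _) fun e _ => ?_
  simpa using abs_bernoulli_moment_le (hP.nonneg _ _) (hP.le_one _ _) hs ha (hPa _ _) (c e)

theorem monomial_add_single (P : Fin n → Fin n → ℝ) (c : Fin n × Fin n → ℕ) {e : Fin n × Fin n}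
    (he : e ∈ edgePairs n) (G : SimpleGraph (Fin n)) :
    monomial P (c + Pi.single e 1) G = monomial P c G * centred P G e.1 e.2 := by
  simp only [monomial, Pi.add_apply, pow_add, Finset.prod_mul_distrib, Pi.single_apply, pow_ite,
    pow_one, pow_zero]
  rw [Finset.prod_ite_eq' (edgePairs n) e fun e' => centred P G e'.1 e'.2, if_pos he]

theorem prod_momentBound_add_single (s a : ℝ) (c : Fin n × Fin n → ℕ) {e : Fin n × Fin n}
    (he : e ∈ edgePairs n) :
    ∏ e' ∈ edgePairs n, momentBound s a ((c + Pi.single e 1 : Fin n × Fin n → ℕ) e') =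
      (∏ e' ∈ edgePairs n, momentBound s a (c e')) * (s * if c e = 0 then a else 1) := by
  rw [← Finset.mul_prod_erase _ _ he, ← Finset.mul_prod_erase (edgePairs n) _ he]
  have hrest : ∏ e' ∈ (edgePairs n).erase e,
      momentBound s a ((c + Pi.single e 1 : Fin n × Fin n → ℕ) e') =
      ∏ e' ∈ (edgePairs n).erase e, momentBound s a (c e') :=
    Finset.prod_congr rfl fun e' he' => by simp [Finset.ne_of_mem_erase he']
  rw [hrest, Pi.add_apply, Pi.single_eq_same, momentBound_succ]
  ring

theorem monomial_mul_centred_pow_succ (hP : IsEdgeProbability P) (c : Fin n × Fin n → ℕ) (m : ℕ)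
    (u v : Fin n) (G : SimpleGraph (Fin n)) :
    monomial P c G * (centred P G ^ (m + 1)) u v = ∑ w ∈ Finset.univ.erase u,
      monomial P (c + Pi.single (sortedPair u w) 1) G * (centred P G ^ m) w v := by
  rw [pow_succ', Matrix.mul_apply, ← Finset.sum_erase Finset.univ (a := u) (by simp),
    Finset.mul_sum]
  refine Finset.sum_congr rfl fun w hw => ?_
  have hsorted : centred P G (sortedPair u w).1 (sortedPair u w).2 = centred P G u w := by
    rcases sortedPair_cases u w with h | h <;> simp [h, centred_comm hP G w u]
  rw [monomial_add_single P c (sortedPair_mem_edgePairs (Finset.ne_of_mem_erase hw).symm),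
    hsorted, mul_assoc]

/-- Each step of a closed walk from `u` either traverses a new pair, which costs a factor `a`, or
one of the at most `∑ c` pairs used before. -/
theorem sum_new_pair_le {a : ℝ} (ha : 0 ≤ a) (c : Fin n × Fin n → ℕ) (u : Fin n) :
    ∑ w ∈ Finset.univ.erase u, (if c (sortedPair u w) = 0 then a else 1) ≤
      n * a + ((∑ e ∈ edgePairs n, c e : ℕ) : ℝ) := by
  have hterm : ∀ w, (if c (sortedPair u w) = 0 then a else 1) ≤ a + c (sortedPair u w) := by
    intro w
    split_ifs with h
    · simp [h]
    · have : (1 : ℝ) ≤ c (sortedPair u w) := by exact_mod_cast Nat.one_le_iff_ne_zero.mpr h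
      linarith
  have hused : ∑ w ∈ Finset.univ.erase u, c (sortedPair u w) ≤ ∑ e ∈ edgePairs n, c e := by
    rw [← Finset.sum_image (sortedPair_injective u).injOn]
    refine Finset.sum_le_sum_of_subset fun e he => ?_
    obtain ⟨w, hw, rfl⟩ := Finset.mem_image.mp he
    exact sortedPair_mem_edgePairs (Finset.ne_of_mem_erase hw).symm
  calc _ ≤ ∑ w ∈ Finset.univ.erase u, (a + c (sortedPair u w)) :=
        Finset.sum_le_sum fun w _ => hterm w
    _ = (Finset.univ.erase u).card * a +
        ((∑ w ∈ Finset.univ.erase u, c (sortedPair u w) : ℕ) : ℝ) := by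
        simp [Finset.sum_add_distrib]
    _ ≤ n * a + ((∑ e ∈ edgePairs n, c e : ℕ) : ℝ) := by
        have hcard : (Finset.univ.erase u).card ≤ n := by simp
        gcongr

theorem IsEdgeProduct.abs_integral_monomial_mul_pow_le (hμ : IsEdgeProduct P μ)
    (hP : IsEdgeProbability P) {s a : ℝ} (hs : 1 ≤ s) (ha : 0 ≤ a)
    (hPa : ∀ v w, P v w ≤ s ^ 2 * a) {N : ℕ} (m : ℕ) (c : Fin n × Fin n → ℕ) (u v : Fin n)
    (hN : ∑ e ∈ edgePairs n, c e + m ≤ N) :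
    |∫ G, monomial P c G * (centred P G ^ m) u v ∂μ.toMeasure| ≤
      (∏ e ∈ edgePairs n, momentBound s a (c e)) * (s * (n * a + N)) ^ m := by
  have hs₀ : 0 ≤ s := zero_le_one.trans hs
  have hbound : ∀ c : Fin n × Fin n → ℕ, 0 ≤ ∏ e ∈ edgePairs n, momentBound s a (c e) :=
    fun c => Finset.prod_nonneg fun e _ => momentBound_nonneg hs₀ ha _
  induction m generalizing c u with
  | zero =>
    rcases eq_or_ne u v with rfl | h
    · simpa using hμ.abs_integral_monomial_le hP hs ha hPa c
    · simpa [Matrix.one_apply_ne h] using hbound c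
  | succ m ih =>
    have hterm : ∀ w ∈ Finset.univ.erase u, |∫ G, monomial P (c + Pi.single (sortedPair u w) 1) G *
        (centred P G ^ m) w v ∂μ.toMeasure| ≤
        (∏ e ∈ edgePairs n, momentBound s a (c e)) *
          (s * if c (sortedPair u w) = 0 then a else 1) * (s * (n * a + N)) ^ m := by
      intro w hw
      have hmem := sortedPair_mem_edgePairs (Finset.ne_of_mem_erase hw).symm
      rw [← prod_momentBound_add_single s a c hmem]
      refine ih _ w ?_
      simp only [Pi.add_apply, Finset.sum_add_distrib, Finset.sum_pi_single', if_pos hmem]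
      omega
    simp only [monomial_mul_centred_pow_succ hP]
    rw [integral_finsetSum _ fun _ _ => .of_finite]
    refine (Finset.abs_sum_le_sum_abs _ _).trans ((Finset.sum_le_sum hterm).trans ?_)
    have hsteps : ∑ w ∈ Finset.univ.erase u, (if c (sortedPair u w) = 0 then a else 1) ≤
        n * a + N :=
      (sum_new_pair_le ha c u).trans (by gcongr; omega)
    rw [← Finset.sum_mul, ← Finset.mul_sum, ← Finset.mul_sum, pow_succ', ← mul_assoc _ (s * _)]
    exact mul_le_mul_of_nonneg_right
      (mul_le_mul_of_nonneg_left (mul_le_mul_of_nonneg_left hsteps hs₀) (hbound c)) (by positivity)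

theorem IsEdgeProduct.integral_trace_pow_le (hμ : IsEdgeProduct P μ) (hP : IsEdgeProbability P)
    {B : ℝ} {k : ℕ} (hk : 0 < k) (hB : ∀ v w, n * P v w ≤ B) (hkB : 2 * k ≤ B) (hn : 0 < n) :
    ∫ G, (centred P G ^ (2 * k)).trace ∂μ.toMeasure ≤ n * (8 * k * B) ^ k := by
  have hn' : (0 : ℝ) < n := by exact_mod_cast hn
  have hk' : (0 : ℝ) < k := by exact_mod_cast hk
  have hB₀ : 0 < B := by linarith
  -- This choice of `s` and `a` balances the two terms of `n * a + 2 * k`.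
  set s := √(B / (2 * k)) with hs
  set a : ℝ := 2 * k / n with ha
  have hs_sq : s ^ 2 = B / (2 * k) := Real.sq_sqrt (by positivity)
  have hs_one : 1 ≤ s := by
    rw [hs, Real.one_le_sqrt, le_div_iff₀ (by positivity)]
    linarith
  have hPa : ∀ v w, P v w ≤ s ^ 2 * a := fun v w => by
    rw [hs_sq, ha, div_mul_div_cancel₀ (by positivity), le_div_iff₀ hn', mul_comm]
    exact hB v w
  have hbase : (s * (n * a + (2 * k : ℕ))) ^ 2 = 8 * k * B := by
    rw [mul_pow, hs_sq, ha]
    push_cast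
    field_simp
    ring
  have hentry : ∀ u, ∫ G, (centred P G ^ (2 * k)) u u ∂μ.toMeasure ≤ (8 * k * B) ^ k := by
    intro u
    have := hμ.abs_integral_monomial_mul_pow_le hP hs_one (by positivity) hPa (2 * k) 0 u u
      (N := 2 * k) (by simp)
    rw [pow_mul _ 2 k, hbase] at this
    refine (le_abs_self _).trans ?_
    simpa [monomial, momentBound] using this
  simp only [Matrix.trace, Matrix.diag_apply]
  rw [integral_finsetSum _ fun _ _ => .of_finite]
  calc _ ≤ ∑ _u : Fin n, (8 * k * B) ^ k := Finset.sum_le_sum fun u _ => hentry u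
    _ = _ := by simp

theorem IsEdgeProduct.real_le_trace_pow_le (hμ : IsEdgeProduct P μ) (hP : IsEdgeProbability P)
    {B t : ℝ} {k : ℕ} (hk : 0 < k) (hB : ∀ v w, n * P v w ≤ B) (hkB : 2 * k ≤ B) (hn : 0 < n)
    (ht : 0 < t) :
    μ.toMeasure.real {G | t ^ (2 * k) ≤ (centred P G ^ (2 * k)).trace} ≤
      n * (8 * k * B / t ^ 2) ^ k := by
  have htk : 0 < t ^ (2 * k) := by positivity
  have hmarkov := mul_meas_ge_le_integral_of_nonneg (μ := μ.toMeasure)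
    (.of_forall fun G => trace_pow_nonneg_of_even (isHermitian_centred hP G) (even_two_mul k))
    .of_finite (t ^ (2 * k))
  calc _ ≤ n * (8 * k * B) ^ k / t ^ (2 * k) := by
        rw [le_div_iff₀' htk]
        exact hmarkov.trans (hμ.integral_trace_pow_le hP hk hB hkB hn)
    _ = _ := by rw [div_pow, ← pow_mul, mul_div_assoc]

end TraceMoments

section Blocks

/-- The vector equal to `a` on `L₁`, to `b` on `L₂` and to `c` on `R`. -/
def blockVec (n : ℕ) (a b c : ℝ) : Fin n → ℝ :=
  fun v => if inL1 n v then a else if inL2 n v then b else c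

/-- Indicator vector of `L₁`; block sums of `x` are written as dot products `indL1 n ⬝ᵥ x`. -/
def indL1 (n : ℕ) : Fin n → ℝ := blockVec n 1 0 0

/-- Indicator vector of `L₂`. -/
def indL2 (n : ℕ) : Fin n → ℝ := blockVec n 0 1 0

/-- Indicator vector of `R`. -/
def indR (n : ℕ) : Fin n → ℝ := blockVec n 0 0 1

/-- The sign vector of the planted partition. -/
def planted (n : ℕ) : Fin n → ℝ := blockVec n 1 1 (-1)

theorem inP1_iff (v : Fin n) : inP1 n v ↔ inL1 n v ∨ inL2 n v := by
  unfold inP1 inL1 inL2; lia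

theorem not_inL2_of_inL1 {v : Fin n} (h : inL1 n v) : ¬ inL2 n v := by
  unfold inL1 at h; unfold inL2; lia

theorem planted_apply (v : Fin n) : planted n v = if inP1 n v then 1 else -1 := by
  simp only [planted, blockVec, inP1_iff]
  split_ifs <;> simp_all

theorem abs_planted_apply (v : Fin n) : |planted n v| = 1 := by
  rw [planted_apply]; split_ifs <;> simp

theorem one_eq_blockVec : (1 : Fin n → ℝ) = blockVec n 1 1 1 := by
  ext v; simp [blockVec]

theorem blockVec_mul_blockVec (a b c a' b' c' : ℝ) :
    blockVec n a b c * blockVec n a' b' c' = blockVec n (a * a') (b * b') (c * c') := by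
  ext v; simp only [Pi.mul_apply, blockVec]; split_ifs <;> rfl

theorem blockVec_dotProduct (a b c : ℝ) (x : Fin n → ℝ) : blockVec n a b c ⬝ᵥ x =
    a * (indL1 n ⬝ᵥ x) + b * (indL2 n ⬝ᵥ x) + c * (indR n ⬝ᵥ x) := by
  have : blockVec n a b c = a • indL1 n + b • indL2 n + c • indR n := by
    ext v
    simp only [indL1, indL2, indR, blockVec, Pi.add_apply, Pi.smul_apply, smul_eq_mul]
    split_ifs <;> ring
  simp only [this, add_dotProduct, smul_dotProduct, smul_eq_mul]

theorem sum_blockVec (hn : 4 ∣ n) (a b c : ℝ) :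
    ∑ v, blockVec n a b c v = n / 4 * (a + b + 2 * c) := by
  have telescope (v : Fin n) : blockVec n a b c v =
      (a - b) * (if (v : ℕ) < n / 4 then 1 else 0) +
        (b - c) * (if (v : ℕ) < n / 2 then 1 else 0) + c := by
    grind [blockVec, inL1, inL2]
  obtain ⟨m, rfl⟩ := hn
  simp only [telescope, Finset.sum_add_distrib, ← Finset.mul_sum, Finset.sum_boole,
    Fin.card_filter_val_lt, Finset.sum_const, Finset.card_univ, Fintype.card_fin, nsmul_eq_mul]
  rw [min_eq_right (by lia), min_eq_right (by lia), show 4 * m / 4 = m by lia,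
    show 4 * m / 2 = 2 * m by lia]
  push_cast
  ring

theorem blockVec_dotProduct_blockVec (hn : 4 ∣ n) (a b c a' b' c' : ℝ) :
    blockVec n a b c ⬝ᵥ blockVec n a' b' c' = n / 4 * (a * a' + b * b' + 2 * (c * c')) := by
  rw [← sum_blockVec hn, ← blockVec_mul_blockVec]; rfl

theorem planted_dotProduct_self : planted n ⬝ᵥ planted n = n := by
  have planted_sq : planted n * planted n = 1 := by
    rw [planted, blockVec_mul_blockVec, one_eq_blockVec]; norm_num
  calc planted n ⬝ᵥ planted n = ∑ v, (planted n * planted n) v := rfl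
    _ = n := by rw [planted_sq]; simp

theorem one_dotProduct_planted (hn : 4 ∣ n) : (1 : Fin n → ℝ) ⬝ᵥ planted n = 0 := by
  rw [one_eq_blockVec, planted, blockVec_dotProduct_blockVec hn]; ring

theorem dotProduct_self_eq_block_masses (x : Fin n → ℝ) :
    x ⬝ᵥ x = indL1 n ⬝ᵥ x ^ 2 + indL2 n ⬝ᵥ x ^ 2 + indR n ⬝ᵥ x ^ 2 := by
  have hblocks := blockVec_dotProduct 1 1 1 (x ^ 2)
  rw [← one_eq_blockVec, one_dotProduct] at hblocks
  simp only [one_mul] at hblocks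
  rw [← hblocks]
  exact Finset.sum_congr rfl fun v _ => (sq (x v)).symm

theorem sq_dotProduct_le_sum_mul {f : Fin n → ℝ} (hf : 0 ≤ f) (x : Fin n → ℝ) :
    (f ⬝ᵥ x) ^ 2 ≤ (∑ v, f v) * (f ⬝ᵥ x ^ 2) :=
  Finset.sum_sq_le_sum_mul_sum_of_sq_le_mul _ (fun v _ => hf v)
    (fun v _ => mul_nonneg (hf v) (sq_nonneg (x v))) fun v _ => by
      simp only [Pi.pow_apply]; linarith

theorem blockVec_nonneg {a b c : ℝ} (ha : 0 ≤ a) (hb : 0 ≤ b) (hc : 0 ≤ c) :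
    0 ≤ blockVec n a b c := by
  intro v
  simp only [blockVec, Pi.zero_apply]
  split_ifs <;> assumption

theorem sq_indL1_dotProduct_le (hn : 4 ∣ n) (x : Fin n → ℝ) :
    (indL1 n ⬝ᵥ x) ^ 2 ≤ n / 4 * (indL1 n ⬝ᵥ x ^ 2) := by
  simpa [indL1, sum_blockVec hn] using
    sq_dotProduct_le_sum_mul (blockVec_nonneg zero_le_one le_rfl le_rfl) x

theorem sq_indL2_dotProduct_le (hn : 4 ∣ n) (x : Fin n → ℝ) :
    (indL2 n ⬝ᵥ x) ^ 2 ≤ n / 4 * (indL2 n ⬝ᵥ x ^ 2) := by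
  simpa [indL2, sum_blockVec hn] using
    sq_dotProduct_le_sum_mul (blockVec_nonneg le_rfl zero_le_one le_rfl) x

theorem sq_indR_dotProduct_le (hn : 4 ∣ n) (x : Fin n → ℝ) :
    (indR n ⬝ᵥ x) ^ 2 ≤ n / 4 * 2 * (indR n ⬝ᵥ x ^ 2) := by
  simpa [indR, sum_blockVec hn] using
    sq_dotProduct_le_sum_mul (blockVec_nonneg le_rfl le_rfl zero_le_one) x

end Blocks

section WeightedLaplacian

variable (W : Matrix (Fin n) (Fin n) ℝ)

theorem wlap_eq : wlap W = Matrix.diagonal (W *ᵥ 1) - W := by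
  simp [wlap, Matrix.mulVec, dotProduct]

theorem wlap_mulVec (x : Fin n → ℝ) : wlap W *ᵥ x = (W *ᵥ 1) * x - W *ᵥ x := by
  ext v; simp [wlap_eq, Matrix.sub_mulVec, Matrix.mulVec_diagonal]

theorem wlap_mulVec_one : wlap W *ᵥ 1 = 0 := by
  rw [wlap_mulVec, mul_one, sub_self]

theorem wlap_sub (W' : Matrix (Fin n) (Fin n) ℝ) : wlap (W - W') = wlap W - wlap W' := by
  have diagonal_sub : Matrix.diagonal (W *ᵥ 1 - W' *ᵥ 1) =
      Matrix.diagonal (W *ᵥ 1) - Matrix.diagonal (W' *ᵥ 1) := (Matrix.diagonal_sub _ _).symm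
  rw [wlap_eq, wlap_eq, wlap_eq, Matrix.sub_mulVec, diagonal_sub]
  abel

theorem dotProduct_wlap_mulVec (x : Fin n → ℝ) :
    x ⬝ᵥ wlap W *ᵥ x = (W *ᵥ 1) ⬝ᵥ x ^ 2 - x ⬝ᵥ W *ᵥ x := by
  rw [wlap_mulVec, dotProduct_sub, dotProduct, dotProduct]
  congr 1
  exact Finset.sum_congr rfl fun v _ => by simp only [Pi.mul_apply, Pi.pow_apply]; ring

variable {W} in
theorem isHermitian_wlap (hW : W.IsHermitian) : (wlap W).IsHermitian := by
  rw [wlap_eq]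
  exact (Matrix.isHermitian_diagonal _).sub hW

theorem isHermitian_adjM (G : SimpleGraph (Fin n)) : (adjM G).IsHermitian :=
  Matrix.IsHermitian.ext fun v w => by simp [adjM, G.adj_comm]

theorem isHermitian_lap (G : SimpleGraph (Fin n)) : (lap G).IsHermitian :=
  isHermitian_wlap (isHermitian_adjM G)

theorem one_dotProduct_lap_mulVec (G : SimpleGraph (Fin n)) (x : Fin n → ℝ) :
    1 ⬝ᵥ lap G *ᵥ x = 0 := by
  rw [← isHermitian_mulVec_dotProduct (isHermitian_lap G), lap, wlap_mulVec_one, zero_dotProduct]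

theorem smul_one_add_dotProduct_lap_mulVec (G : SimpleGraph (Fin n)) (a : ℝ) (x : Fin n → ℝ) :
    (a • 1 + x) ⬝ᵥ lap G *ᵥ (a • 1 + x) = x ⬝ᵥ lap G *ᵥ x := by
  have lap_one : lap G *ᵥ 1 = 0 := wlap_mulVec_one (adjM G)
  rw [Matrix.mulVec_add, Matrix.mulVec_smul, lap_one, smul_zero, zero_add, add_dotProduct,
    smul_dotProduct, one_dotProduct_lap_mulVec, smul_zero, zero_add]

/-- The vector of degrees of `G`. -/
def degVec (G : SimpleGraph (Fin n)) : Fin n → ℝ := adjM G *ᵥ 1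

theorem deg_eq_degVec (G : SimpleGraph (Fin n)) (v : Fin n) : (deg G v : ℝ) = degVec G v := by
  simp [degVec, adjM, deg, Matrix.mulVec, dotProduct, Finset.sum_boole, Nat.card_eq_fintype_card,
    Fintype.card_subtype]

end WeightedLaplacian

section ExpectedLaplacian

theorem nestedP_eq_blockVec (p q K : ℝ) (v w : Fin n) : nestedP n p q K v w =
    blockVec n (blockVec n (K * p) p q w) (blockVec n p (K * p) q w) (blockVec n q q p w) v := by
  have := @not_inL2_of_inL1 n v
  have := @not_inL2_of_inL1 n w
  simp only [nestedP, blockVec, inP1_iff]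
  by_cases hv₁ : inL1 n v <;> by_cases hv₂ : inL2 n v <;> by_cases hw₁ : inL1 n w <;>
    by_cases hw₂ : inL2 n w <;> simp_all

theorem nestedP_comm (p q K : ℝ) (v w : Fin n) : nestedP n p q K v w = nestedP n p q K w v := by
  simp only [nestedP, and_comm]

theorem nestedP_nonneg {p q K : ℝ} (hp : 0 ≤ p) (hq : 0 ≤ q) (hK : 0 ≤ K) (v w : Fin n) :
    0 ≤ nestedP n p q K v w := by
  unfold nestedP
  split_ifs <;> positivity

theorem nestedP_le {p q K : ℝ} (hp : 0 ≤ p) (hqp : q ≤ p) (hK : 1 ≤ K) (v w : Fin n) :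
    nestedP n p q K v w ≤ K * p := by
  have : p ≤ K * p := le_mul_of_one_le_left hp hK
  unfold nestedP
  split_ifs <;> linarith

/-- The expected adjacency matrix of the nested block instance, diagonal included, with
`T = n p` and `g = n q`. -/
def nestedMat (n : ℕ) (T g K : ℝ) : Matrix (Fin n) (Fin n) ℝ :=
  Matrix.of (nestedP n (T / n) (g / n) K)

/-- The row sums of `nestedMat n T g K` over `L₁ ∪ L₂`, when `4 ∣ n`. -/
def expDegL (T g K : ℝ) : ℝ := T * (K + 1) / 4 + g / 2

/-- The row sums of `nestedMat n T g K`, when `4 ∣ n`. -/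
def expDeg (n : ℕ) (T g K : ℝ) : Fin n → ℝ :=
  blockVec n (expDegL T g K) (expDegL T g K) ((T + g) / 2)

variable {T g K : ℝ}

theorem nestedMat_mulVec (x : Fin n → ℝ) : nestedMat n T g K *ᵥ x = blockVec n
    ((K * T * (indL1 n ⬝ᵥ x) + T * (indL2 n ⬝ᵥ x) + g * (indR n ⬝ᵥ x)) / n)
    ((T * (indL1 n ⬝ᵥ x) + K * T * (indL2 n ⬝ᵥ x) + g * (indR n ⬝ᵥ x)) / n)
    ((g * (indL1 n ⬝ᵥ x) + g * (indL2 n ⬝ᵥ x) + T * (indR n ⬝ᵥ x)) / n) := by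
  have dotProduct_nestedP (v : Fin n) : (nestedMat n T g K *ᵥ x) v =
      blockVec n (blockVec n (K * (T / n)) (T / n) (g / n) ⬝ᵥ x)
        (blockVec n (T / n) (K * (T / n)) (g / n) ⬝ᵥ x)
        (blockVec n (g / n) (g / n) (T / n) ⬝ᵥ x) v := by
    simp only [nestedMat, Matrix.mulVec, Matrix.of_apply, dotProduct, nestedP_eq_blockVec]
    by_cases hv₁ : inL1 n v
    · simp [blockVec, hv₁]
    · by_cases hv₂ : inL2 n v <;> simp [blockVec, hv₁, hv₂]
  ext v
  rw [dotProduct_nestedP]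
  simp only [blockVec_dotProduct]
  congr 1 <;> ring

theorem nestedMat_mulVec_blockVec (hn : 4 ∣ n) (hn₀ : 0 < n) (a b c : ℝ) :
    nestedMat n T g K *ᵥ blockVec n a b c = blockVec n ((K * T * a + T * b + 2 * g * c) / 4)
      ((T * a + K * T * b + 2 * g * c) / 4) ((g * a + g * b + 2 * T * c) / 4) := by
  have hn' : (n : ℝ) ≠ 0 := mod_cast hn₀.ne'
  simp only [nestedMat_mulVec, indL1, indL2, indR, blockVec_dotProduct_blockVec hn]
  congr 1 <;> field_simp <;> ring

theorem nestedMat_mulVec_one (hn : 4 ∣ n) (hn₀ : 0 < n) :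
    nestedMat n T g K *ᵥ 1 = expDeg n T g K := by
  rw [one_eq_blockVec, nestedMat_mulVec_blockVec hn hn₀, expDeg, expDegL]
  congr 1 <;> ring

theorem nestedMat_mulVec_planted (hn : 4 ∣ n) (hn₀ : 0 < n) :
    nestedMat n T g K *ᵥ planted n = expDeg n T g K * planted n - g • planted n := by
  rw [planted, nestedMat_mulVec_blockVec hn hn₀]
  ext v
  simp only [expDeg, expDegL, blockVec, Pi.sub_apply, Pi.mul_apply, Pi.smul_apply, smul_eq_mul]
  split_ifs <;> ring

theorem wlap_nestedMat_mulVec_planted (hn : 4 ∣ n) (hn₀ : 0 < n) :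
    wlap (nestedMat n T g K) *ᵥ planted n = g • planted n := by
  rw [wlap_mulVec, nestedMat_mulVec_one hn hn₀, nestedMat_mulVec_planted hn hn₀, sub_sub_cancel]

theorem dotProduct_nestedMat_mulVec (x : Fin n → ℝ) : x ⬝ᵥ nestedMat n T g K *ᵥ x =
    (K * T * ((indL1 n ⬝ᵥ x) ^ 2 + (indL2 n ⬝ᵥ x) ^ 2) +
      2 * T * ((indL1 n ⬝ᵥ x) * (indL2 n ⬝ᵥ x)) + T * (indR n ⬝ᵥ x) ^ 2 +
      2 * g * ((indL1 n ⬝ᵥ x) + (indL2 n ⬝ᵥ x)) * (indR n ⬝ᵥ x)) / n := by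
  rw [nestedMat_mulVec, dotProduct_comm, blockVec_dotProduct]
  ring

theorem le_dotProduct_wlap_nestedMat (hn : 4 ∣ n) (hn₀ : 0 < n) (hg : 0 ≤ g) (hgT : g ≤ T)
    (hK : 1 ≤ K) {z : Fin n → ℝ} (hz : z ⬝ᵥ 1 = 0) :
    g * (z ⬝ᵥ z) ≤ z ⬝ᵥ wlap (nestedMat n T g K) *ᵥ z := by
  have hn' : (0 : ℝ) < n := mod_cast hn₀
  have cs₁ := sq_indL1_dotProduct_le hn z
  have cs₂ := sq_indL2_dotProduct_le hn z
  have csR := sq_indR_dotProduct_le hn z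
  rw [dotProduct_comm, one_eq_blockVec, blockVec_dotProduct] at hz
  rw [dotProduct_wlap_mulVec, nestedMat_mulVec_one hn hn₀, expDeg, expDegL,
    blockVec_dotProduct, dotProduct_nestedMat_mulVec, dotProduct_self_eq_block_masses,
    le_sub_iff_add_le, ← le_sub_iff_add_le', div_le_iff₀ hn']
  set a := indL1 n ⬝ᵥ z
  set b := indL2 n ⬝ᵥ z
  have hc : indR n ⬝ᵥ z = -(a + b) := by linarith
  rw [hc] at csR ⊢
  have hL : 0 ≤ T * (K + 1) / 4 - g / 2 := by nlinarith
  have hR : 0 ≤ (T - g) / 2 := by linarith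
  linarith [mul_le_mul_of_nonneg_left (add_le_add cs₁ cs₂) hL,
    mul_le_mul_of_nonneg_left csR hR, mul_nonneg hR (sq_nonneg (a - b))]

theorem le_dotProduct_wlap_nestedMat_of_dotProduct_planted (hn : 4 ∣ n) (hn₀ : 0 < n)
    (hg : 0 ≤ g) (hgT : g ≤ T) (hK : 1 ≤ K) {z : Fin n → ℝ} (hz : z ⬝ᵥ 1 = 0)
    (hz' : z ⬝ᵥ planted n = 0) :
    (T + g) / 2 * (z ⬝ᵥ z) ≤ z ⬝ᵥ wlap (nestedMat n T g K) *ᵥ z := by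
  have hn' : (0 : ℝ) < n := mod_cast hn₀
  have cs₁ := sq_indL1_dotProduct_le hn z
  have cs₂ := sq_indL2_dotProduct_le hn z
  rw [dotProduct_comm, one_eq_blockVec, blockVec_dotProduct] at hz
  rw [dotProduct_comm, planted, blockVec_dotProduct] at hz'
  rw [dotProduct_wlap_mulVec, nestedMat_mulVec_one hn hn₀, expDeg, expDegL,
    blockVec_dotProduct, dotProduct_nestedMat_mulVec, dotProduct_self_eq_block_masses,
    le_sub_iff_add_le, ← le_sub_iff_add_le', div_le_iff₀ hn']
  have hR : indR n ⬝ᵥ z = 0 := by linarith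
  have hL : indL2 n ⬝ᵥ z = -(indL1 n ⬝ᵥ z) := by linarith
  rw [hL] at cs₂ ⊢
  rw [hR]
  have hKT : 0 ≤ (K - 1) * T := mul_nonneg (sub_nonneg.mpr hK) (hg.trans hgT)
  linarith [mul_le_mul_of_nonneg_left (add_le_add cs₁ cs₂) hKT]

end ExpectedLaplacian

section TypicalGraphs

/-- Deviation of the adjacency matrix from the edge probabilities. -/
def noise (T g K : ℝ) (G : SimpleGraph (Fin n)) : Matrix (Fin n) (Fin n) ℝ :=
  adjM G - nestedMat n T g K

/-- The parameters of a nested block instance, scaled as `T = n p` and `g = n q`, together with the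
admissible relative error `η` of the noise bounds. -/
structure IsNestedRegime (n : ℕ) (α K T g η : ℝ) : Prop where
  four_dvd : 4 ∣ n
  n_pos : 0 < n
  g_pos : 0 < g
  T_eq : T = α * g
  two_le : 2 ≤ α
  le_K : 3 * α ≤ K
  eta_pos : 0 < η
  eta_le : 4000 * K ^ 2 * η ≤ 1
  two_le_eta_T : 2 ≤ η * T
  large : 256 * α ^ 2 * K ≤ T

/-- The deterministic properties of a random graph from which both halves of the theorem follow.
The last field bounds row `v` of the noise against a vector that depends on the graph, but only
through the edges that avoid `v`. -/
structure IsTypical (α K T g η : ℝ) (G : SimpleGraph (Fin n)) : Prop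
    extends IsNestedRegime n α K T g η where
  form_le : ∀ x y, |x ⬝ᵥ noise T g K G *ᵥ y| ≤ η * T * (l2 x * l2 y)
  row_one : ∀ v, |(noise T g K G *ᵥ 1) v| ≤ η * T
  row_planted : ∀ v, |(noise T g K G *ᵥ planted n) v| ≤ η * T
  row_capture : ∀ v, (∃ y, CapturesNear (lap (isolate G v)) g (g / 4) y) →
    ∃ y, CapturesNear (lap (isolate G v)) g (g / 4) y ∧ |(noise T g K G *ᵥ y) v| ≤ η * T * ‖y‖

theorem adjM_mulVec_eq (T g K : ℝ) (G : SimpleGraph (Fin n)) (x : Fin n → ℝ) :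
    adjM G *ᵥ x = nestedMat n T g K *ᵥ x + noise T g K G *ᵥ x := by
  rw [noise, Matrix.sub_mulVec, add_sub_cancel]

theorem lap_mulVec_eq (T g K : ℝ) (G : SimpleGraph (Fin n)) (x : Fin n → ℝ) :
    lap G *ᵥ x = wlap (nestedMat n T g K) *ᵥ x + wlap (noise T g K G) *ᵥ x := by
  rw [noise, wlap_sub, ← Matrix.add_mulVec, add_sub_cancel, lap]

namespace IsNestedRegime

variable {α K T g η : ℝ} (h : IsNestedRegime n α K T g η)
include h

theorem cast_pos : (0 : ℝ) < n := mod_cast h.n_pos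

theorem two_le_card : 2 ≤ n := by
  linarith [Nat.le_of_dvd h.n_pos h.four_dvd]

theorem two_mul_le : 2 * g ≤ T := by
  rw [h.T_eq]; gcongr; exacts [h.g_pos.le, h.two_le]

theorem T_pos : 0 < T := by
  linarith [h.two_mul_le, h.g_pos]

theorem g_le : g ≤ T := by
  linarith [h.two_mul_le, h.g_pos]

theorem six_le : 6 ≤ K := by
  linarith [h.two_le, h.le_K]

theorem eta_T_pos : 0 < η * T := mul_pos h.eta_pos h.T_pos

theorem eta_T_le : 8000 * (η * T) ≤ g := by
  have : 8000 * (α * η) ≤ 1 := by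
    nlinarith [h.six_le, h.eta_le, h.two_le, h.le_K, h.eta_pos,
      mul_pos h.eta_pos (show 0 < K by linarith [h.six_le])]
  rw [h.T_eq]
  linarith [mul_le_mul_of_nonneg_right this h.g_pos.le]

theorem eta_K_le : 24000 * (K * η) ≤ 1 := by
  nlinarith [h.six_le, h.eta_le,
    mul_nonneg (show 0 ≤ K by linarith [h.six_le]) h.eta_pos.le]

theorem eta_le_one : η ≤ 1 := by
  nlinarith [h.six_le, h.eta_K_le, h.eta_pos]

theorem six_mul_T_le : 6 * T ≤ K * T :=
  mul_le_mul_of_nonneg_right h.six_le h.T_pos.le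

theorem sqrt_K_mul_T_le : √(K * T) ≤ g / 16 := by
  have g_pos := h.g_pos
  rw [Real.sqrt_le_left (by positivity)]
  have hα : 0 < α ^ 2 := by have := h.two_le; positivity
  have large : α ^ 2 * (256 * (K * T)) ≤ α ^ 2 * g ^ 2 := by
    have hTT : T * T = α ^ 2 * g ^ 2 := by rw [h.T_eq]; ring
    linarith [mul_le_mul_of_nonneg_right h.large h.T_pos.le]
  linarith [le_of_mul_le_mul_left large hα]

theorem expDeg_add_le (v : Fin n) : expDeg n T g K v + η * T ≤ K * T := by
  have := h.six_mul_T_le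
  have := h.eta_T_le
  simp only [expDeg, expDegL, blockVec]
  split_ifs <;> linarith [h.two_mul_le, h.g_pos]

theorem eta_T_lt_expDegL : η * T < expDegL T g K := by
  rw [expDegL]
  linarith [h.six_mul_T_le, h.eta_T_le, h.two_mul_le, h.g_pos]

theorem le_expDeg (v : Fin n) : (T + g) / 2 ≤ expDeg n T g K v := by
  have := h.six_mul_T_le
  simp only [expDeg, expDegL, blockVec]
  split_ifs <;> linarith [h.two_mul_le, h.g_pos]

end IsNestedRegime

namespace IsTypical

variable {α K T g η : ℝ} {G : SimpleGraph (Fin n)} (h : IsTypical α K T g η G)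
include h

theorem degVec_eq (v : Fin n) : degVec G v = expDeg n T g K v + (noise T g K G *ᵥ 1) v := by
  rw [degVec, adjM_mulVec_eq T g K, nestedMat_mulVec_one h.four_dvd h.n_pos, Pi.add_apply]

theorem abs_degVec_sub_le (v : Fin n) : |degVec G v - expDeg n T g K v| ≤ η * T := by
  rw [h.degVec_eq, add_sub_cancel_left]
  exact h.row_one v

theorem degVec_le (v : Fin n) : degVec G v ≤ K * T := by
  linarith [h.expDeg_add_le v, (abs_le.mp (h.abs_degVec_sub_le v)).2]

theorem le_degVec (v : Fin n) : T / 2 ≤ degVec G v := by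
  linarith [h.le_expDeg v, (abs_le.mp (h.abs_degVec_sub_le v)).1, h.g_pos, h.eta_T_le]

theorem abs_dotProduct_wlap_noise_le (x : Fin n → ℝ) :
    |x ⬝ᵥ wlap (noise T g K G) *ᵥ x| ≤ 2 * (η * T) * (x ⬝ᵥ x) := by
  have diagonal_le : |(noise T g K G *ᵥ 1) ⬝ᵥ x ^ 2| ≤ η * T * (x ⬝ᵥ x) := by
    refine (Finset.abs_sum_le_sum_abs _ _).trans ?_
    rw [dotProduct, Finset.mul_sum]
    refine Finset.sum_le_sum fun v _ => ?_
    rw [abs_mul, Pi.pow_apply, abs_of_nonneg (sq_nonneg (x v)), ← sq]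
    exact mul_le_mul_of_nonneg_right (h.row_one v) (sq_nonneg _)
  have form_le := h.form_le x x
  rw [← sq, l2_sq] at form_le
  rw [dotProduct_wlap_mulVec]
  linarith [abs_sub ((noise T g K G *ᵥ 1) ⬝ᵥ x ^ 2) (x ⬝ᵥ noise T g K G *ᵥ x)]

theorem le_dotProduct_lap {z : Fin n → ℝ} (hz : z ⬝ᵥ 1 = 0) :
    (g - 2 * (η * T)) * (z ⬝ᵥ z) ≤ z ⬝ᵥ lap G *ᵥ z := by
  rw [lap_mulVec_eq T g K, dotProduct_add]
  linarith [le_dotProduct_wlap_nestedMat h.four_dvd h.n_pos h.g_pos.le h.g_le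
    (by linarith [h.six_le] : 1 ≤ K) hz, (abs_le.mp (h.abs_dotProduct_wlap_noise_le z)).1]

theorem le_dotProduct_lap_of_dotProduct_planted {z : Fin n → ℝ} (hz : z ⬝ᵥ 1 = 0)
    (hz' : z ⬝ᵥ planted n = 0) :
    ((T + g) / 2 - 2 * (η * T)) * (z ⬝ᵥ z) ≤ z ⬝ᵥ lap G *ᵥ z := by
  rw [lap_mulVec_eq T g K, dotProduct_add]
  linarith [le_dotProduct_wlap_nestedMat_of_dotProduct_planted h.four_dvd h.n_pos h.g_pos.le
    h.g_le (by linarith [h.six_le] : 1 ≤ K) hz hz',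
    (abs_le.mp (h.abs_dotProduct_wlap_noise_le z)).1]

theorem lap_mulVec_planted :
    lap G *ᵥ planted n = g • planted n + wlap (noise T g K G) *ᵥ planted n := by
  rw [lap_mulVec_eq T g K, wlap_nestedMat_mulVec_planted h.four_dvd h.n_pos]

theorem abs_wlap_noise_mulVec_planted_le (v : Fin n) :
    |(wlap (noise T g K G) *ᵥ planted n) v| ≤ 2 * (η * T) := by
  rw [wlap_mulVec, Pi.sub_apply, Pi.mul_apply]
  refine (abs_sub _ _).trans ?_
  rw [abs_mul, abs_planted_apply]
  linarith [h.row_one v, h.row_planted v]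

theorem l2_wlap_noise_mulVec_planted_le :
    l2 (wlap (noise T g K G) *ᵥ planted n) ≤ 2 * (η * T) * √n := by
  have := h.eta_T_pos
  refine l2_le_of_dotProduct_self_le (by positivity) ?_
  rw [mul_pow, Real.sq_sqrt (Nat.cast_nonneg n), dotProduct]
  calc _ ≤ ∑ _v : Fin n, (2 * (η * T)) ^ 2 := Finset.sum_le_sum fun v _ => by
        rw [← sq, ← sq_abs]
        exact pow_le_pow_left₀ (abs_nonneg _) (h.abs_wlap_noise_mulVec_planted_le v) 2
    _ = (2 * (η * T)) ^ 2 * n := by simp [mul_comm]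

theorem le_eig_lap : g - 2 * (η * T) ≤ eig (lap G) 1 :=
  le_eig_one_of_le_form h.two_le_card (isHermitian_lap G) 1 fun _ hz => h.le_dotProduct_lap hz

theorem planted_dotProduct_lap_mulVec_le :
    planted n ⬝ᵥ lap G *ᵥ planted n ≤ (g + 2 * (η * T)) * n := by
  have wlap_noise_le := (abs_le.mp (h.abs_dotProduct_wlap_noise_le (planted n))).2
  rw [planted_dotProduct_self] at wlap_noise_le
  rw [h.lap_mulVec_planted, dotProduct_add, dotProduct_smul, planted_dotProduct_self, smul_eq_mul]
  linarith

theorem eig_lap_le : eig (lap G) 1 ≤ g + 2 * (η * T) := by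
  have dotProduct_self (a c : ℝ) : (a • (1 : Fin n → ℝ) + c • planted n) ⬝ᵥ
      (a • 1 + c • planted n) = n * (a ^ 2 + c ^ 2) := by
    have one_dotProduct_one : (1 : Fin n → ℝ) ⬝ᵥ 1 = n := by simp
    simp only [add_dotProduct, dotProduct_add, smul_dotProduct, dotProduct_smul,
      dotProduct_comm (planted n) 1, one_dotProduct_planted h.four_dvd, planted_dotProduct_self,
      one_dotProduct_one, smul_eq_mul]
    ring
  refine eig_one_le_of_form_le h.two_le_card (isHermitian_lap G) 1 (planted n)
    (fun a c hac => ?_) fun a c => ?_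
  · have hsq := dotProduct_self a c
    rw [hac, zero_dotProduct] at hsq
    have := (mul_eq_zero.mp hsq.symm).resolve_left h.cast_pos.ne'
    exact ⟨by nlinarith [sq_nonneg a, sq_nonneg c], by nlinarith [sq_nonneg a, sq_nonneg c]⟩
  · have := h.eta_T_pos
    have := h.g_pos
    have : 0 ≤ (g + 2 * (η * T)) * (n * a ^ 2) := by positivity
    rw [dotProduct_self, smul_one_add_dotProduct_lap_mulVec, smul_dotProduct, Matrix.mulVec_smul,
      dotProduct_smul, smul_eq_mul, smul_eq_mul]
    linarith [mul_le_mul_of_nonneg_left h.planted_dotProduct_lap_mulVec_le (sq_nonneg c)]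

end IsTypical

end TypicalGraphs

section Isolation

theorem adjM_zero_or_one (G : SimpleGraph (Fin n)) (v w : Fin n) :
    adjM G v w = 0 ∨ adjM G v w = 1 := by
  by_cases h : G.Adj v w <;> simp [adjM, h]

theorem lap_mulVec_apply (G : SimpleGraph (Fin n)) (x : Fin n → ℝ) (v : Fin n) :
    (lap G *ᵥ x) v = ∑ w, adjM G v w * (x v - x w) := by
  rw [lap, wlap_mulVec]
  simp [Matrix.mulVec, dotProduct, mul_sub, Finset.sum_mul]

theorem adjM_isolate (G : SimpleGraph (Fin n)) (v a b : Fin n) :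
    adjM (isolate G v) a b = if a = v ∨ b = v then 0 else adjM G a b := by
  by_cases ha : a = v <;> by_cases hb : b = v <;> simp [adjM, isolate, ha, hb]

theorem lap_isolate_mulVec_self (G : SimpleGraph (Fin n)) (v : Fin n) (x : Fin n → ℝ) :
    (lap (isolate G v) *ᵥ x) v = 0 := by
  simp [lap_mulVec_apply, adjM_isolate]

theorem lap_isolate_mulVec_of_ne (G : SimpleGraph (Fin n)) {v w : Fin n} (hw : w ≠ v)
    (x : Fin n → ℝ) :
    (lap (isolate G v) *ᵥ x) w = (lap G *ᵥ x) w - adjM G w v * (x w - x v) := by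
  simp only [lap_mulVec_apply, adjM_isolate, hw, false_or, ite_mul, zero_mul]
  rw [eq_sub_iff_add_eq, ← Finset.add_sum_erase _ _ (Finset.mem_univ v),
    ← Finset.add_sum_erase _ _ (Finset.mem_univ v), if_pos rfl, zero_add, add_comm]
  congr 1
  exact Finset.sum_congr rfl fun w' hw' => if_neg (Finset.ne_of_mem_erase hw')

theorem lap_isolate_mulVec_update (G : SimpleGraph (Fin n)) (v : Fin n) (x : Fin n → ℝ) (t : ℝ) :
    lap (isolate G v) *ᵥ Function.update x v t = lap (isolate G v) *ᵥ x := by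
  ext w
  rw [lap_mulVec_apply, lap_mulVec_apply]
  refine Finset.sum_congr rfl fun w' _ => ?_
  rw [adjM_isolate]
  split_ifs with h
  · rw [zero_mul, zero_mul]
  · obtain ⟨hw, hw'⟩ := not_or.mp h
    rw [Function.update_of_ne hw, Function.update_of_ne hw']

theorem le_dotProduct_lap_isolate (G : SimpleGraph (Fin n)) {v : Fin n} {z : Fin n → ℝ}
    (hz : z v = 0) : z ⬝ᵥ lap G *ᵥ z - z ⬝ᵥ z ≤ z ⬝ᵥ lap (isolate G v) *ᵥ z := by
  simp only [dotProduct, ← Finset.sum_sub_distrib]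
  refine Finset.sum_le_sum fun w _ => ?_
  by_cases hw : w = v
  · simp [hw, hz]
  · rw [lap_isolate_mulVec_of_ne G hw, hz]
    rcases adjM_zero_or_one G w v with h | h <;> rw [h] <;> nlinarith [mul_self_nonneg (z w)]

theorem dotProduct_eq_zero_of_mulVec_eq_zero {M : Matrix (Fin n) (Fin n) ℝ} (hM : M.IsHermitian)
    {t : ℝ} (ht : t ≠ 0) {u f : Fin n → ℝ} (hu : M *ᵥ u = t • u) (hf : M *ᵥ f = 0) :
    u ⬝ᵥ f = 0 := by
  have hadjoint := isHermitian_mulVec_dotProduct hM u f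
  rw [hu, hf, dotProduct_zero, smul_dotProduct, smul_eq_mul] at hadjoint
  exact (mul_eq_zero.mp hadjoint).resolve_left ht

theorem l2_single (v : Fin n) : l2 (Pi.single v (1 : ℝ) : Fin n → ℝ) = 1 := by
  simp [l2_eq_norm]

end Isolation

section LeaveOneOutEigenvector

namespace IsTypical

variable {α K T g η : ℝ} {G : SimpleGraph (Fin n)} (h : IsTypical α K T g η G)
include h

/-- An eigenvector of `lap (isolate G v)` with nonzero eigenvalue vanishes at `v` and is orthogonal
to the constants. If there were two below `5 / 4 * g`, some combination would be orthogonal to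
`planted n` too, where the Laplacian is of order `T / 2`. -/
theorem subsingleton_eigenvalues_lap_isolate (v : Fin n) :
    {i | |(isHermitian_lap (isolate G v)).eigenvalues i - g| < g / 4}.Subsingleton := by
  set hL := isHermitian_lap (isolate G v)
  have orthogonal {i} (hi : |hL.eigenvalues i - g| < g / 4) :
      eigvec hL i ⬝ᵥ 1 = 0 ∧ eigvec hL i v = 0 := by
    have hne : hL.eigenvalues i ≠ 0 := by linarith [(abs_lt.mp hi).1, h.g_pos]
    have hvec := mulVec_eigvec hL i
    refine ⟨dotProduct_eq_zero_of_mulVec_eq_zero hL hne hvec (wlap_mulVec_one _), ?_⟩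
    have hv := congrFun hvec v
    rw [lap_isolate_mulVec_self, Pi.smul_apply, smul_eq_mul] at hv
    exact (mul_eq_zero.mp hv.symm).resolve_left hne
  intro i (hi : |hL.eigenvalues i - g| < g / 4) j (hj : |hL.eigenvalues j - g| < g / 4)
  by_contra hij
  obtain ⟨a, c, hac, z, hz, hz_planted, hself, hform⟩ :=
    exists_eigvec_combination_orthogonal hL hij (planted n)
  have hz_one : z ⬝ᵥ 1 = 0 := by
    rw [hz, add_dotProduct, smul_dotProduct, smul_dotProduct, (orthogonal hi).1,
      (orthogonal hj).1, smul_zero, smul_zero, add_zero]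
  have hz_v : z v = 0 := by simp [hz, (orthogonal hi).2, (orthogonal hj).2]
  have lower : 5 / 4 * g * (a ^ 2 + c ^ 2) ≤ hL.eigenvalues i * a ^ 2 + hL.eigenvalues j * c ^ 2 :=
    calc 5 / 4 * g * (a ^ 2 + c ^ 2)
      _ ≤ ((T + g) / 2 - 2 * (η * T) - 1) * (a ^ 2 + c ^ 2) := mul_le_mul_of_nonneg_right
          (by linarith [h.eta_T_le, h.two_le_eta_T, h.two_mul_le, h.g_pos]) hac.le
      _ ≤ z ⬝ᵥ lap (isolate G v) *ᵥ z := by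
          rw [← hself]
          linarith [h.le_dotProduct_lap_of_dotProduct_planted hz_one hz_planted,
            le_dotProduct_lap_isolate G hz_v]
      _ = _ := hform
  set m := max (hL.eigenvalues i) (hL.eigenvalues j)
  have hm : m < 5 / 4 * g :=
    max_lt (by linarith [(abs_lt.mp hi).2]) (by linarith [(abs_lt.mp hj).2])
  have upper : hL.eigenvalues i * a ^ 2 + hL.eigenvalues j * c ^ 2 ≤ m * (a ^ 2 + c ^ 2) := by
    rw [mul_add]
    gcongr
    exacts [le_max_left _ _, le_max_right _ _]
  linarith [mul_lt_mul_of_pos_right hm hac]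

theorem abs_noise_mulVec_le_l2 (v : Fin n) (e : Fin n → ℝ) :
    |(noise T g K G *ᵥ e) v| ≤ η * T * l2 e := by
  simpa [l2_single] using h.form_le (Pi.single v 1) e

variable {t : ℝ} {U : Fin n → ℝ} (hU : lap G *ᵥ U = t • U)
include hU

theorem l2_lap_isolate_residual_le (v : Fin n) :
    l2 (lap (isolate G v) *ᵥ Function.update U v 0 - t • Function.update U v 0) ≤
      2 * ‖U‖ * √(K * T) := by
  have K_pos : 0 < K := by linarith [h.six_le]
  have T_pos := h.T_pos
  have residual_eq (w : Fin n) :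
      (lap (isolate G v) *ᵥ Function.update U v 0 - t • Function.update U v 0) w =
        if w = v then 0 else -(adjM G v w * (U w - U v)) := by
    rw [lap_isolate_mulVec_update, Pi.sub_apply, Pi.smul_apply, smul_eq_mul]
    split_ifs with hw
    · rw [hw, lap_isolate_mulVec_self, Function.update_self]; ring
    · rw [lap_isolate_mulVec_of_ne G hw, hU, Pi.smul_apply, smul_eq_mul,
        Function.update_of_ne hw, ← (isHermitian_adjM G).apply, star_trivial]
      ring
  refine l2_le_of_dotProduct_self_le (by positivity) ?_
  rw [mul_pow, Real.sq_sqrt (by positivity), dotProduct]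
  calc _ ≤ ∑ w, (2 * ‖U‖) ^ 2 * adjM G v w := Finset.sum_le_sum fun w _ => by
        have hUw : |U w - U v| ≤ 2 * ‖U‖ := by
          linarith [abs_sub (U w) (U v), norm_le_pi_norm U w, norm_le_pi_norm U v,
            Real.norm_eq_abs (U w), Real.norm_eq_abs (U v)]
        rw [residual_eq]
        rcases adjM_zero_or_one G v w with h₀ | h₁
        · simp [h₀]
        · rw [h₁]
          split_ifs
          · rw [mul_zero, mul_one]; positivity
          · nlinarith [sq_le_sq' (by linarith [(abs_le.mp hUw).1]) (abs_le.mp hUw).2]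
    _ = (2 * ‖U‖) ^ 2 * degVec G v := by
        simp [← Finset.mul_sum, degVec, Matrix.mulVec, dotProduct]
    _ ≤ (2 * ‖U‖) ^ 2 * (K * T) := mul_le_mul_of_nonneg_left (h.degVec_le v) (sq_nonneg _)

variable (ht : |t - g| ≤ 2 * (η * T))
include ht

theorem exists_capture_update (v : Fin n) : ∃ (a : ℝ) (y : Fin n → ℝ),
    l2 (Function.update U v 0 - a • y) ≤ ‖U‖ ∧ |(noise T g K G *ᵥ y) v| ≤ η * T * ‖y‖ := by
  obtain ⟨y, hy, hyv⟩ := h.row_capture v <| exists_capturesNear (isHermitian_lap (isolate G v))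
    (by linarith [h.g_pos]) (h.subsingleton_eigenvalues_lap_isolate v)
  obtain ⟨a, ha⟩ := hy t (by linarith [h.eta_T_le, h.g_pos]) (Function.update U v 0)
  refine ⟨a, y, ?_, hyv⟩
  have hmul : g / 8 * l2 (Function.update U v 0 - a • y) ≤ g / 8 * ‖U‖ := by
    linarith [h.l2_lap_isolate_residual_le hU v,
      mul_le_mul_of_nonneg_left h.sqrt_K_mul_T_le (show 0 ≤ 2 * ‖U‖ by positivity)]
  exact le_of_mul_le_mul_left hmul (by linarith [h.g_pos])

/-- `U` is split into its value at `v`, its projection to the line captured by the graph without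
`v`, which is independent of row `v`, and a remainder, which is small in Euclidean norm. -/
theorem abs_noise_mulVec_le_norm (v : Fin n) :
    |(noise T g K G *ᵥ U) v| ≤ 4 * (η * T * ‖U‖) := by
  obtain ⟨a, y, hle, hyv⟩ := h.exists_capture_update hU ht v
  set x := Function.update U v 0 with hx
  set e := x - a • y with he
  have eta_T_nonneg := h.eta_T_pos.le
  have norm_x_le : ‖x‖ ≤ ‖U‖ := (pi_norm_le_iff_of_nonneg (norm_nonneg _)).mpr fun w => by
    by_cases hw : w = v
    · simp [hx, hw]
    · rw [hx, Function.update_of_ne hw]; exact norm_le_pi_norm U w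
  have norm_ay_le : |a| * ‖y‖ ≤ 2 * ‖U‖ := by
    have hay : a • y = x - e := by rw [he]; abel
    rw [← Real.norm_eq_abs, ← norm_smul, hay]
    linarith [norm_sub_le x e, norm_le_l2 e]
  have capture_le : |a * (noise T g K G *ᵥ y) v| ≤ 2 * (η * T * ‖U‖) := by
    rw [abs_mul]
    linarith [mul_le_mul_of_nonneg_left hyv (abs_nonneg a),
      mul_le_mul_of_nonneg_left norm_ay_le eta_T_nonneg]
  have remainder_le : |(noise T g K G *ᵥ e) v| ≤ η * T * ‖U‖ :=
    (h.abs_noise_mulVec_le_l2 v e).trans (mul_le_mul_of_nonneg_left hle eta_T_nonneg)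
  have diagonal_le : |U v * (noise T g K G *ᵥ Pi.single v 1) v| ≤ η * T * ‖U‖ := by
    have hrow := h.abs_noise_mulVec_le_l2 v (Pi.single v 1)
    rw [l2_single, mul_one] at hrow
    rw [abs_mul, mul_comm]
    exact mul_le_mul hrow (norm_le_pi_norm U v) (abs_nonneg _) eta_T_nonneg
  have decomposition : U = a • y + e + U v • Pi.single v 1 := by
    ext w
    by_cases hw : w = v
    · subst hw; simp [he, hx]
    · simp [he, hx, hw]
  rw [decomposition, Matrix.mulVec_add, Matrix.mulVec_add, Matrix.mulVec_smul, Matrix.mulVec_smul,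
    ← decomposition]
  refine (abs_add_three _ _ _).trans ?_
  simp only [Pi.smul_apply, smul_eq_mul]
  linarith

end IsTypical

end LeaveOneOutEigenvector

section UnnormalizedBisection

theorem setOf_neg_eq_of_planted_mul_pos {U : Fin n → ℝ} (hU : ∀ v, 0 < planted n v * U v) {a : ℝ}
    (ha : a ≠ 0) :
    {v | (a • U) v < 0} = {v | inP1 n v} ∨ {v | (a • U) v < 0} = {v | ¬ inP1 n v} := by
  have sign (v : Fin n) : if inP1 n v then 0 < U v else U v < 0 := by
    have := hU v
    rw [planted_apply] at this
    split_ifs at this ⊢ <;> linarith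
  simp only [Pi.smul_apply, smul_eq_mul]
  rcases ha.lt_or_gt with ha | ha
  · left
    ext v
    have := sign v
    by_cases hv : inP1 n v <;> simp only [hv, if_true, if_false] at this <;>
      simp [hv, mul_neg_iff, ha, ha.le, this, this.le]
  · right
    ext v
    have := sign v
    by_cases hv : inP1 n v <;> simp only [hv, if_true, if_false] at this <;>
      simp [hv, mul_neg_iff, ha, ha.le, this, this.le]

namespace IsTypical

variable {α K T g η : ℝ} {G : SimpleGraph (Fin n)} (h : IsTypical α K T g η G)
include h

theorem l2_le_of_lap_mulVec_eq {a t : ℝ} {w : Fin n → ℝ} (ht : t ≤ g + 2 * (η * T))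
    (hw : w ⬝ᵥ 1 = 0) (hw' : w ⬝ᵥ planted n = 0)
    (heig : lap G *ᵥ (a • planted n + w) = t • (a • planted n + w)) :
    l2 w ≤ |a| * (16 * η * √n) := by
  have T_pos := h.T_pos
  have eta_pos := h.eta_pos
  set r := wlap (noise T g K G) *ᵥ planted n with hr
  have form_eq : w ⬝ᵥ lap G *ᵥ w = t * (w ⬝ᵥ w) - a * (w ⬝ᵥ r) := by
    have := congrArg (w ⬝ᵥ ·) heig
    simp only [Matrix.mulVec_add, Matrix.mulVec_smul, h.lap_mulVec_planted, dotProduct_add,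
      dotProduct_smul, hw', smul_eq_mul, ← hr] at this
    linarith
  have residual_le : -(a * (w ⬝ᵥ r)) ≤ |a| * (l2 w * (2 * (η * T) * √n)) :=
    calc -(a * (w ⬝ᵥ r))
      _ ≤ |a| * |w ⬝ᵥ r| := by rw [← abs_mul]; exact neg_le_abs _
      _ ≤ |a| * (l2 w * l2 r) := by gcongr; exact abs_dotProduct_le_l2_mul_l2 w r
      _ ≤ _ := by
          have := l2_nonneg w
          gcongr
          exact h.l2_wlap_noise_mulVec_planted_le
  have coercive : T / 8 * l2 w * l2 w ≤ T / 8 * (|a| * (16 * η * √n)) * l2 w :=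
    calc T / 8 * l2 w * l2 w
      _ = T / 8 * (w ⬝ᵥ w) := by rw [← l2_sq]; ring
      _ ≤ ((T + g) / 2 - 2 * (η * T) - t) * (w ⬝ᵥ w) := by
          gcongr
          · rw [← l2_sq]; positivity
          · linarith [h.eta_T_le, h.two_mul_le, h.g_pos]
      _ ≤ |a| * (l2 w * (2 * (η * T) * √n)) := by
          linarith [h.le_dotProduct_lap_of_dotProduct_planted hw hw']
      _ = _ := by ring
  rcases (l2_nonneg w).eq_or_lt with hzero | hpos
  · rw [← hzero]; positivity
  · exact le_of_mul_le_mul_left (le_of_mul_le_mul_right coercive hpos) (by positivity)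

theorem exists_eq_smul_planted_add {u : Fin n → ℝ}
    (hu : IsUnitEigenvector (lap G) (eig (lap G) 1) u) :
    ∃ (a : ℝ) (δ : Fin n → ℝ), a ≠ 0 ∧ u = a • (planted n + δ) ∧ l2 δ ≤ 16 * η * √n := by
  obtain ⟨heig, hunit⟩ := hu
  have eig_ne_zero : eig (lap G) 1 ≠ 0 := by linarith [h.le_eig_lap, h.eta_T_le, h.g_pos]
  have n_ne_zero := h.cast_pos.ne'
  have u_one := dotProduct_eq_zero_of_mulVec_eq_zero (isHermitian_lap G) eig_ne_zero heig
    (wlap_mulVec_one (adjM G))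
  set a := (u ⬝ᵥ planted n) / n with ha
  set w := u - a • planted n with hw
  have u_eq : u = a • planted n + w := by rw [hw, add_sub_cancel]
  have w_one : w ⬝ᵥ 1 = 0 := by
    rw [hw, sub_dotProduct, smul_dotProduct, u_one, dotProduct_comm (planted n),
      one_dotProduct_planted h.four_dvd, smul_zero, sub_zero]
  have w_planted : w ⬝ᵥ planted n = 0 := by
    rw [hw, sub_dotProduct, smul_dotProduct, planted_dotProduct_self, ha, smul_eq_mul,
      div_mul_cancel₀ _ n_ne_zero, sub_self]
  have w_le := h.l2_le_of_lap_mulVec_eq h.eig_lap_le w_one w_planted (u_eq ▸ heig)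
  have a_ne_zero : a ≠ 0 := by
    intro a_zero
    rw [a_zero, abs_zero, zero_mul] at w_le
    rw [a_zero, zero_smul, zero_add] at u_eq
    have l2_u : l2 u = 1 := by rw [l2, hunit, Real.sqrt_one]
    rw [← u_eq, l2_u] at w_le
    exact absurd w_le (by norm_num)
  refine ⟨a, a⁻¹ • w, a_ne_zero, ?_, ?_⟩
  · rwa [smul_add, smul_inv_smul₀ a_ne_zero]
  · rw [l2_smul, abs_inv, inv_mul_le_iff₀ (abs_pos.mpr a_ne_zero)]
    exact w_le

theorem abs_nestedMat_mulVec_le (x : Fin n → ℝ) (v : Fin n) :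
    |(nestedMat n T g K *ᵥ x) v| ≤ K * T * l2 x / √n := by
  have n_pos := h.cast_pos
  have T_pos := h.T_pos
  have K_pos : 0 < K := by linarith [h.six_le]
  have row_le : l2 (nestedMat n T g K v) ≤ K * T / √n := by
    refine l2_le_of_dotProduct_self_le (by positivity) ?_
    calc nestedMat n T g K v ⬝ᵥ nestedMat n T g K v
      _ ≤ ∑ _w : Fin n, (K * (T / n)) ^ 2 := Finset.sum_le_sum fun w _ => by
          rw [← sq]
          exact pow_le_pow_left₀ (nestedP_nonneg (by positivity) (by have := h.g_pos; positivity)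
            K_pos.le v w) (nestedP_le (by positivity) (by gcongr; exact h.g_le)
            (by linarith [h.six_le]) v w) 2
      _ = (K * T / √n) ^ 2 := by
          rw [div_pow, Real.sq_sqrt n_pos.le, Finset.sum_const, Finset.card_univ, Fintype.card_fin,
            nsmul_eq_mul]
          field_simp
  calc |(nestedMat n T g K *ᵥ x) v|
    _ ≤ l2 (nestedMat n T g K v) * l2 x := abs_dotProduct_le_l2_mul_l2 _ _
    _ ≤ K * T / √n * l2 x := mul_le_mul_of_nonneg_right row_le (l2_nonneg x)
    _ = _ := by ring

variable {t : ℝ} {δ : Fin n → ℝ}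

theorem abs_nestedMat_mulVec_le_of_l2_le (hδ : l2 δ ≤ 16 * η * √n) (v : Fin n) :
    |(nestedMat n T g K *ᵥ δ) v| ≤ 16 * (K * η) * T := by
  refine (h.abs_nestedMat_mulVec_le δ v).trans ?_
  rw [div_le_iff₀ (Real.sqrt_pos.mpr h.cast_pos)]
  have KT_nonneg : 0 ≤ K * T := by linarith [h.six_mul_T_le, h.T_pos]
  linarith [mul_le_mul_of_nonneg_left hδ KT_nonneg]

variable (ht : |t - g| ≤ 2 * (η * T))

include ht in
theorem le_degVec_sub (v : Fin n) : T / 8 ≤ degVec G v - t := by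
  linarith [h.le_expDeg v, (abs_le.mp (h.abs_degVec_sub_le v)).1, (abs_le.mp ht).2,
    h.eta_T_le, h.two_mul_le, h.g_pos]

variable (heig : lap G *ᵥ (planted n + δ) = t • (planted n + δ))
include heig

theorem degVec_sub_mul_eq (v : Fin n) :
    (degVec G v - t) * (planted n + δ) v = (expDeg n T g K v - g) * planted n v +
      (nestedMat n T g K *ᵥ δ) v + (noise T g K G *ᵥ (planted n + δ)) v := by
  have row := congrFun heig v
  have nestedMat_add : nestedMat n T g K *ᵥ (planted n + δ) =
      nestedMat n T g K *ᵥ planted n + nestedMat n T g K *ᵥ δ := Matrix.mulVec_add _ _ _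
  rw [lap, wlap_mulVec, ← degVec, adjM_mulVec_eq T g K, nestedMat_add,
    nestedMat_mulVec_planted h.four_dvd h.n_pos] at row
  simp only [Pi.sub_apply, Pi.mul_apply, Pi.add_apply (_ - _),
    Pi.add_apply (_ + _) (noise T g K G *ᵥ _), Pi.smul_apply, smul_eq_mul] at row
  linarith

variable (hδ : l2 δ ≤ 16 * η * √n)
include ht hδ

theorem norm_planted_add_le : ‖planted n + δ‖ ≤ 32 * K := by
  set U := planted n + δ
  have T_pos := h.T_pos
  have T_norm_nonneg : 0 ≤ T * ‖U‖ := by positivity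
  have eta_T_norm_le : 144000 * (η * T * ‖U‖) ≤ T * ‖U‖ := by
    have : 144000 * η ≤ 1 := by
      linarith [h.eta_K_le, mul_le_mul_of_nonneg_right h.six_le h.eta_pos.le]
    linarith [mul_le_mul_of_nonneg_right this T_norm_nonneg]
  have entry_le (v : Fin n) : |U v| ≤ 16 * K + ‖U‖ / 2 := by
    have expDeg_le : |(expDeg n T g K v - g) * planted n v| ≤ K * T := by
      rw [abs_mul, abs_planted_apply, mul_one, abs_le]
      constructor <;>
        linarith [h.le_expDeg v, h.expDeg_add_le v, h.six_mul_T_le, h.eta_T_pos, h.g_pos, h.g_le]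
    have product_le : |(degVec G v - t) * U v| ≤
        K * T + 16 * (K * η) * T + 4 * (η * T * ‖U‖) := by
      rw [h.degVec_sub_mul_eq heig v]
      exact (abs_add_three _ _ _).trans <| add_le_add_three expDeg_le
        (h.abs_nestedMat_mulVec_le_of_l2_le hδ v) (h.abs_noise_mulVec_le_norm heig ht v)
    have degVec_sub_ge := h.le_degVec_sub ht v
    rw [abs_mul, abs_of_pos (by linarith)] at product_le
    have scaled : T / 8 * |U v| ≤ T / 8 * (16 * K + ‖U‖ / 2) := by
      linarith [mul_le_mul_of_nonneg_right degVec_sub_ge (abs_nonneg (U v)),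
        mul_le_mul_of_nonneg_right h.eta_K_le T_pos.le, h.six_mul_T_le]
    exact le_of_mul_le_mul_left scaled (by positivity)
  have norm_le : ‖U‖ ≤ 16 * K + ‖U‖ / 2 :=
    (pi_norm_le_iff_of_nonneg (by linarith [h.six_le, norm_nonneg U])).mpr entry_le
  linarith

theorem planted_mul_pos (v : Fin n) : 0 < planted n v * (planted n + δ) v := by
  set U := planted n + δ
  have abs_planted_mul (x : ℝ) : |planted n v * x| = |x| := by
    rw [abs_mul, abs_planted_apply, one_mul]
  have nestedMat_ge := (abs_le.mp <| (abs_planted_mul _).trans_le <|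
    h.abs_nestedMat_mulVec_le_of_l2_le hδ v).1
  have noise_ge := (abs_le.mp <| (abs_planted_mul _).trans_le <|
    h.abs_noise_mulVec_le_norm heig ht v).1
  have norm_le := mul_le_mul_of_nonneg_left (h.norm_planted_add_le ht heig hδ) h.eta_T_pos.le
  have planted_sq : planted n v * planted n v = 1 := by
    rw [← sq, ← sq_abs, abs_planted_apply, one_pow]
  have signed_eq : (degVec G v - t) * (planted n v * U v) = (expDeg n T g K v - g) +
      planted n v * (nestedMat n T g K *ᵥ δ) v + planted n v * (noise T g K G *ᵥ U) v := by
    linear_combination planted n v * h.degVec_sub_mul_eq heig v +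
      (expDeg n T g K v - g) * planted_sq
  have signed_pos : 0 < (degVec G v - t) * (planted n v * U v) := by
    linarith [h.le_expDeg v, mul_le_mul_of_nonneg_right h.eta_K_le h.T_pos.le, h.two_mul_le,
      h.g_pos]
  exact (pos_iff_pos_of_mul_pos signed_pos).mp (by linarith [h.le_degVec_sub ht v, h.T_pos])

omit ht heig hδ

theorem bisectCorrect : BisectCorrect n (lap G) := by
  intro u hu
  obtain ⟨a, δ, ha, rfl, hδ⟩ := h.exists_eq_smul_planted_add hu
  have heig : lap G *ᵥ (planted n + δ) = eig (lap G) 1 • (planted n + δ) := by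
    have := hu.1
    rw [Matrix.mulVec_smul, smul_comm] at this
    exact smul_right_injective _ ha this
  have ht : |eig (lap G) 1 - g| ≤ 2 * (η * T) :=
    abs_le.mpr ⟨by linarith [h.le_eig_lap], by linarith [h.eig_lap_le]⟩
  exact setOf_neg_eq_of_planted_mul_pos (h.planted_mul_pos ht heig hδ) ha

end IsTypical

end UnnormalizedBisection

section NormalizedLaplacians

/-- The square roots of the degrees, that is the diagonal of `D^{1/2}`. -/
def sqrtDeg (G : SimpleGraph (Fin n)) : Fin n → ℝ := fun v => √(degVec G v)

variable {G : SimpleGraph (Fin n)}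

theorem lapSym_eq (G : SimpleGraph (Fin n)) :
    lapSym G = 1 - diagonal (sqrtDeg G)⁻¹ * adjM G * diagonal (sqrtDeg G)⁻¹ := by
  simp only [lapSym, deg_eq_degVec, one_div]; rfl

theorem lapRW_eq (G : SimpleGraph (Fin n)) : lapRW G = 1 - diagonal (degVec G)⁻¹ * adjM G := by
  simp only [lapRW, deg_eq_degVec]; rfl

theorem isHermitian_lapSym (G : SimpleGraph (Fin n)) : (lapSym G).IsHermitian := by
  rw [lapSym_eq]
  refine isHermitian_one.sub ?_
  simpa using isHermitian_conjTranspose_mul_mul (diagonal (sqrtDeg G)⁻¹) (isHermitian_adjM G)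

theorem sqrtDeg_pos (hd : ∀ v, 0 < degVec G v) (v : Fin n) : 0 < sqrtDeg G v :=
  Real.sqrt_pos.mpr (hd v)

theorem sqrtDeg_mul_self (hd : ∀ v, 0 < degVec G v) : sqrtDeg G * sqrtDeg G = degVec G :=
  funext fun v => Real.mul_self_sqrt (hd v).le

theorem sqrtDeg_mul_dotProduct (hd : ∀ v, 0 < degVec G v) (x y : Fin n → ℝ) :
    (sqrtDeg G * x) ⬝ᵥ (sqrtDeg G * y) = degVec G ⬝ᵥ (x * y) := by
  rw [← sqrtDeg_mul_self hd]
  exact Finset.sum_congr rfl fun v _ => by simp only [Pi.mul_apply]; ring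

theorem exists_eq_sqrtDeg_mul (hd : ∀ v, 0 < degVec G v) (x : Fin n → ℝ) :
    ∃ y, x = sqrtDeg G * y :=
  ⟨x / sqrtDeg G, funext fun v => (mul_div_cancel₀ (x v) (sqrtDeg_pos hd v).ne').symm⟩

theorem lap_mulVec (x : Fin n → ℝ) : lap G *ᵥ x = degVec G * x - adjM G *ᵥ x :=
  wlap_mulVec (adjM G) x

theorem lapSym_mulVec_sqrtDeg_mul (hd : ∀ v, 0 < degVec G v) (y : Fin n → ℝ) :
    lapSym G *ᵥ (sqrtDeg G * y) = (lap G *ᵥ y) / sqrtDeg G := by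
  have cancel : diagonal (sqrtDeg G)⁻¹ *ᵥ (sqrtDeg G * y) = y :=
    funext fun v => by
      rw [mulVec_diagonal]; exact inv_mul_cancel_left₀ (sqrtDeg_pos hd v).ne' (y v)
  funext v
  have sqrtDeg_ne_zero := (sqrtDeg_pos hd v).ne'
  rw [lapSym_eq, sub_mulVec, one_mulVec, ← mulVec_mulVec, cancel, ← mulVec_mulVec, lap_mulVec,
    ← sqrtDeg_mul_self hd, Pi.sub_apply, mulVec_diagonal]
  simp only [Pi.mul_apply, Pi.inv_apply, Pi.div_apply, Pi.sub_apply]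
  field_simp

theorem sqrtDeg_mul_dotProduct_lapSym_mulVec (hd : ∀ v, 0 < degVec G v) (y : Fin n → ℝ) :
    (sqrtDeg G * y) ⬝ᵥ lapSym G *ᵥ (sqrtDeg G * y) = y ⬝ᵥ lap G *ᵥ y := by
  rw [lapSym_mulVec_sqrtDeg_mul hd]
  refine Finset.sum_congr rfl fun v _ => ?_
  have sqrtDeg_ne_zero := (sqrtDeg_pos hd v).ne'
  simp only [Pi.mul_apply, Pi.div_apply]
  field_simp

theorem dotProduct_sq_le_dotProduct_smul_one_add_sq {f x : Fin n → ℝ} (hf : ∀ v, 0 ≤ f v)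
    (hfx : f ⬝ᵥ x = 0) (a : ℝ) : f ⬝ᵥ x ^ 2 ≤ f ⬝ᵥ (a • 1 + x) ^ 2 := by
  have expand : f ⬝ᵥ (a • 1 + x) ^ 2 = a ^ 2 * ∑ v, f v + 2 * a * (f ⬝ᵥ x) + f ⬝ᵥ x ^ 2 := by
    simp only [dotProduct, Finset.mul_sum, ← Finset.sum_add_distrib]
    refine Finset.sum_congr rfl fun v _ => ?_
    simp only [Pi.pow_apply, Pi.add_apply, Pi.smul_apply, Pi.one_apply, smul_eq_mul]
    ring
  rw [expand, hfx, mul_zero, add_zero]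
  exact le_add_of_nonneg_left (mul_nonneg (sq_nonneg a) (Finset.sum_nonneg fun v _ => hf v))

theorem le_eig_lapSym_one (hn : 2 ≤ n) (hd : ∀ v, 0 < degVec G v) {t : ℝ}
    (hle : ∀ y, degVec G ⬝ᵥ y = 0 → t * (degVec G ⬝ᵥ y ^ 2) ≤ y ⬝ᵥ lap G *ᵥ y) :
    t ≤ eig (lapSym G) 1 := by
  refine le_eig_one_of_le_form hn (isHermitian_lapSym G) (sqrtDeg G * 1) fun x hx => ?_
  obtain ⟨y, rfl⟩ := exists_eq_sqrtDeg_mul hd x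
  rw [sqrtDeg_mul_dotProduct hd, mul_one] at hx
  rw [sqrtDeg_mul_dotProduct hd, sqrtDeg_mul_dotProduct_lapSym_mulVec hd, ← sq]
  exact hle y hx

theorem eig_lapSym_one_le (hn : 2 ≤ n) (hd : ∀ v, 0 < degVec G v) {t : ℝ} (ht : 0 ≤ t)
    {x : Fin n → ℝ} (hx : ∀ a : ℝ, a • 1 + x ≠ 0)
    (hle : ∀ a : ℝ, x ⬝ᵥ lap G *ᵥ x ≤ t * (degVec G ⬝ᵥ (a • 1 + x) ^ 2)) :
    eig (lapSym G) 1 ≤ t := by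
  have combination (a c : ℝ) : a • (sqrtDeg G * 1) + c • (sqrtDeg G * x) =
      sqrtDeg G * (a • 1 + c • x) := by
    rw [mul_add, mul_smul_comm, mul_smul_comm]
  have rescale {a c : ℝ} (hc : c ≠ 0) : a • (1 : Fin n → ℝ) + c • x = c • ((a / c) • 1 + x) := by
    rw [smul_add, smul_smul, mul_div_cancel₀ _ hc]
  refine eig_one_le_of_form_le hn (isHermitian_lapSym G) (sqrtDeg G * 1) (sqrtDeg G * x)
    (fun a c hac => ?_) fun a c => ?_
  · rw [combination] at hac
    have hac₀ : a • 1 + c • x = 0 := funext fun v =>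
      (mul_eq_zero.mp (congrFun hac v)).resolve_left (sqrtDeg_pos hd v).ne'
    obtain rfl : c = 0 := by
      by_contra hc
      rw [rescale hc] at hac₀
      exact hx (a / c) ((smul_eq_zero.mp hac₀).resolve_left hc)
    have := congrFun hac₀ ⟨0, by lia⟩
    simpa using this
  · rw [combination, sqrtDeg_mul_dotProduct hd, sqrtDeg_mul_dotProduct_lapSym_mulVec hd,
      smul_one_add_dotProduct_lap_mulVec, mulVec_smul, dotProduct_smul, smul_dotProduct,
      smul_eq_mul, smul_eq_mul, ← sq]
    rcases eq_or_ne c 0 with rfl | hc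
    · rw [zero_mul]
      exact mul_nonneg ht (Finset.sum_nonneg fun v _ => mul_nonneg (hd v).le (sq_nonneg _))
    · rw [rescale hc, smul_pow, dotProduct_smul, smul_eq_mul]
      calc c * (c * (x ⬝ᵥ lap G *ᵥ x)) = c ^ 2 * (x ⬝ᵥ lap G *ᵥ x) := by ring
        _ ≤ c ^ 2 * (t * (degVec G ⬝ᵥ ((a / c) • 1 + x) ^ 2)) := by gcongr; exact hle _
        _ = _ := by ring

theorem lap_mulVec_of_lapSym_mulVec (hd : ∀ v, 0 < degVec G v) {t : ℝ} {y : Fin n → ℝ}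
    (hy : lapSym G *ᵥ (sqrtDeg G * y) = t • (sqrtDeg G * y)) :
    lap G *ᵥ y = t • (degVec G * y) := by
  rw [lapSym_mulVec_sqrtDeg_mul hd] at hy
  funext v
  have entry := congrFun hy v
  rw [Pi.div_apply, div_eq_iff (sqrtDeg_pos hd v).ne'] at entry
  rw [entry, ← sqrtDeg_mul_self hd]
  simp only [Pi.mul_apply, Pi.smul_apply, smul_eq_mul]
  ring

theorem lap_mulVec_of_lapRW_mulVec (hd : ∀ v, 0 < degVec G v) {t : ℝ} {y : Fin n → ℝ}
    (hy : lapRW G *ᵥ y = t • y) : lap G *ᵥ y = t • (degVec G * y) := by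
  rw [lapRW_eq, sub_mulVec, one_mulVec, ← mulVec_mulVec] at hy
  funext v
  have entry := congrFun hy v
  have degVec_ne_zero := (hd v).ne'
  rw [Pi.sub_apply, mulVec_diagonal, Pi.inv_apply, Pi.smul_apply, smul_eq_mul] at entry
  rw [lap_mulVec]
  simp only [Pi.mul_apply, Pi.sub_apply, Pi.smul_apply, smul_eq_mul]
  field_simp at entry
  linarith

theorem lapRW_eq_conj_lapSym (hd : ∀ v, 0 < degVec G v) :
    lapRW G = diagonal (sqrtDeg G)⁻¹ * lapSym G * diagonal (sqrtDeg G) := by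
  have inv_mul : diagonal (sqrtDeg G)⁻¹ * diagonal (sqrtDeg G) = 1 := by
    rw [diagonal_mul_diagonal', ← diagonal_one]
    exact congrArg diagonal (funext fun v => inv_mul_cancel₀ (sqrtDeg_pos hd v).ne')
  have inv_mul_inv :
      diagonal (sqrtDeg G)⁻¹ * diagonal (sqrtDeg G)⁻¹ = diagonal (degVec G)⁻¹ := by
    rw [diagonal_mul_diagonal', ← sqrtDeg_mul_self hd, mul_inv]
    rfl
  rw [lapRW_eq, lapSym_eq, Matrix.mul_sub, Matrix.sub_mul, Matrix.mul_one, inv_mul, ← inv_mul_inv]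
  simp only [Matrix.mul_assoc, inv_mul, Matrix.mul_one]

theorem eig_lapRW (hd : ∀ v, 0 < degVec G v) (k : ℕ) : eig (lapRW G) k = eig (lapSym G) k := by
  have mul_inv : diagonal (sqrtDeg G) * diagonal (sqrtDeg G)⁻¹ = 1 := by
    rw [diagonal_mul_diagonal', ← diagonal_one]
    exact congrArg diagonal (funext fun v => mul_inv_cancel₀ (sqrtDeg_pos hd v).ne')
  rw [eig, eig, lapRW_eq_conj_lapSym hd, Matrix.mul_assoc, charpoly_mul_comm, Matrix.mul_assoc,
    mul_inv, Matrix.mul_one]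

end NormalizedLaplacians

section Misclassification

theorem ncard_le_ncard_add_dotProduct_self {A S : Set (Fin n)} {w : Fin n → ℝ}
    (hw : ∀ v ∈ A, v ∉ S → 1 ≤ w v ^ 2) : (A.ncard : ℝ) ≤ S.ncard + w ⬝ᵥ w := by
  have ncard_diff_le : ((A \ S).ncard : ℝ) ≤ w ⬝ᵥ w := calc
    ((A \ S).ncard : ℝ) = ∑ v ∈ (A \ S).toFinset, 1 := by
      rw [Set.ncard_eq_toFinset_card', Finset.sum_const, nsmul_one]
    _ ≤ ∑ v ∈ (A \ S).toFinset, w v * w v := Finset.sum_le_sum fun v hv => by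
      obtain ⟨hA, hS⟩ := Set.mem_toFinset.mp hv
      exact (hw v hA hS).trans_eq (sq _)
    _ ≤ w ⬝ᵥ w := Finset.sum_le_univ_sum_of_nonneg fun v => mul_self_nonneg _
  have ncard_le : (A.ncard : ℝ) ≤ (A \ S).ncard + S.ncard :=
    mod_cast Set.ncard_le_ncard_sdiff_add_ncard A S
  linarith

theorem le_misclassRate (hn₀ : 0 < n) {S : Set (Fin n)} {r : ℝ}
    (hP : r * n ≤ (symmDiff S {v : Fin n | inP1 n v}).ncard)
    (hnP : r * n ≤ (symmDiff S {v : Fin n | ¬ inP1 n v}).ncard) : r ≤ misclassRate n S := by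
  rw [misclassRate, le_div_iff₀ (mod_cast hn₀), Nat.cast_min]
  exact le_min hP hnP

theorem le_misclassRate_of_separates (hn₀ : 0 < n) {x Y : Fin n → ℝ} {A B : Set (Fin n)} {r : ℝ}
    (hA : ∀ v ∈ A, inP1 n v ∧ 1 ≤ x v) (hB : ∀ v ∈ B, inP1 n v ∧ x v ≤ -1)
    (hrA : r * n + (Y - x) ⬝ᵥ (Y - x) ≤ A.ncard) (hrB : r * n + (Y - x) ⬝ᵥ (Y - x) ≤ B.ncard) :
    r ≤ misclassRate n {v | Y v < 0} := by
  have ncard_A_le := ncard_le_ncard_add_dotProduct_self (A := A) (w := Y - x)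
    (S := symmDiff {v | Y v < 0} {v | inP1 n v}) fun v hv hnot => by
      obtain ⟨hP, hx⟩ := hA v hv
      have neg : Y v < 0 := by_contra fun h => hnot (Or.inr ⟨hP, h⟩)
      rw [Pi.sub_apply]; nlinarith
  have ncard_B_le := ncard_le_ncard_add_dotProduct_self (A := B) (w := Y - x)
    (S := symmDiff {v | Y v < 0} {v | ¬ inP1 n v}) fun v hv hnot => by
      obtain ⟨hP, hx⟩ := hB v hv
      have nonneg : 0 ≤ Y v := not_lt.mp fun h => hnot (Or.inl ⟨h, not_not.mpr hP⟩)
      rw [Pi.sub_apply]; nlinarith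
  exact le_misclassRate hn₀ (by linarith) (by linarith)

theorem ncard_setOf_inL1 (hn : 4 ∣ n) : ({v | inL1 n v}.ncard : ℝ) = n / 4 := by
  have card_eq : ({v | inL1 n v}.ncard : ℝ) = ∑ v, blockVec n 1 0 0 v := by
    rw [Set.ncard_eq_toFinset_card', Set.toFinset_ofPred, ← Finset.sum_boole]
    exact Finset.sum_congr rfl fun v _ => by simp [blockVec]
  rw [card_eq, sum_blockVec hn]; ring

theorem ncard_setOf_inL2 (hn : 4 ∣ n) : ({v | inL2 n v}.ncard : ℝ) = n / 4 := by
  have card_eq : ({v | inL2 n v}.ncard : ℝ) = ∑ v, blockVec n 0 1 0 v := by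
    rw [Set.ncard_eq_toFinset_card', Set.toFinset_ofPred, ← Finset.sum_boole]
    refine Finset.sum_congr rfl fun v _ => ?_
    have disjoint := @not_inL2_of_inL1 n v
    simp only [blockVec]
    split_ifs <;> simp_all
  rw [card_eq, sum_blockVec hn]; ring

theorem le_misclassRate_of_blockVec (hn : 4 ∣ n) (hn₀ : 0 < n) {Y : Fin n → ℝ} {a b c r : ℝ}
    (hab : 1 ≤ a ∧ b ≤ -1 ∨ a ≤ -1 ∧ 1 ≤ b)
    (hr : r * n + (Y - blockVec n a b c) ⬝ᵥ (Y - blockVec n a b c) ≤ n / 4) :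
    r ≤ misclassRate n {v | Y v < 0} := by
  have eq_on_L1 {v : Fin n} (hv : inL1 n v) : blockVec n a b c v = a := if_pos hv
  have eq_on_L2 {v : Fin n} (hv : inL2 n v) : blockVec n a b c v = b := by
    rw [blockVec, if_neg fun h => not_inL2_of_inL1 h hv, if_pos hv]
  have inP1_of_inL1 {v : Fin n} (hv : inL1 n v) : inP1 n v := (inP1_iff v).mpr (.inl hv)
  have inP1_of_inL2 {v : Fin n} (hv : inL2 n v) : inP1 n v := (inP1_iff v).mpr (.inr hv)
  rcases hab with ⟨ha, hb⟩ | ⟨ha, hb⟩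
  · exact le_misclassRate_of_separates hn₀ (A := {v | inL1 n v}) (B := {v | inL2 n v})
      (fun v hv => ⟨inP1_of_inL1 hv, (eq_on_L1 hv).symm ▸ ha⟩)
      (fun v hv => ⟨inP1_of_inL2 hv, (eq_on_L2 hv).symm ▸ hb⟩)
      (hr.trans_eq (ncard_setOf_inL1 hn).symm) (hr.trans_eq (ncard_setOf_inL2 hn).symm)
  · exact le_misclassRate_of_separates hn₀ (A := {v | inL2 n v}) (B := {v | inL1 n v})
      (fun v hv => ⟨inP1_of_inL2 hv, (eq_on_L2 hv).symm ▸ hb⟩)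
      (fun v hv => ⟨inP1_of_inL1 hv, (eq_on_L1 hv).symm ▸ ha⟩)
      (hr.trans_eq (ncard_setOf_inL2 hn).symm) (hr.trans_eq (ncard_setOf_inL1 hn).symm)

end Misclassification

section NormalizedEigenvalue

/-- The sign vector of the partition of `L` into `L₁` and `L₂`, extended by zero to `R`. -/
def splitL (n : ℕ) : Fin n → ℝ := blockVec n 1 (-1) 0

theorem smul_one_add_splitL (a : ℝ) : a • 1 + splitL n = blockVec n (a + 1) (a - 1) a := by
  ext v
  simp only [splitL, blockVec, Pi.add_apply, Pi.smul_apply, Pi.one_apply, smul_eq_mul]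
  split_ifs <;> ring

namespace IsTypical

variable {α K T g η : ℝ} {G : SimpleGraph (Fin n)} (h : IsTypical α K T g η G)
include h

theorem degVec_pos (v : Fin n) : 0 < degVec G v := by
  linarith [h.le_degVec v, h.T_pos]

theorem eig_lapSym_pos : 0 < eig (lapSym G) 1 := by
  have KT_pos : 0 < K * T := mul_pos (by linarith [h.six_le]) h.T_pos
  have gap_pos : 0 < g - 2 * (η * T) := by linarith [h.g_pos, h.eta_T_le]
  refine (div_pos gap_pos KT_pos).trans_le
    (le_eig_lapSym_one h.two_le_card h.degVec_pos fun y hy => ?_)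
  set z := (-(y ⬝ᵥ 1 / n)) • 1 + y with hz
  have dotProduct_one : z ⬝ᵥ 1 = 0 := by
    have one_dotProduct_one : (1 : Fin n → ℝ) ⬝ᵥ 1 = n := by simp
    rw [hz, add_dotProduct, smul_dotProduct, one_dotProduct_one, smul_eq_mul, neg_mul,
      div_mul_cancel₀ _ h.cast_pos.ne', neg_add_cancel]
  calc (g - 2 * (η * T)) / (K * T) * (degVec G ⬝ᵥ y ^ 2)
      ≤ (g - 2 * (η * T)) / (K * T) * (degVec G ⬝ᵥ z ^ 2) := by
        gcongr
        exact dotProduct_sq_le_dotProduct_smul_one_add_sq (fun v => (h.degVec_pos v).le) hy _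
    _ ≤ (g - 2 * (η * T)) / (K * T) * (K * T * (z ⬝ᵥ z)) := by
        gcongr
        rw [dotProduct, dotProduct, Finset.mul_sum]
        refine Finset.sum_le_sum fun v _ => ?_
        rw [Pi.pow_apply, ← sq]
        exact mul_le_mul_of_nonneg_right (h.degVec_le v) (sq_nonneg _)
    _ = (g - 2 * (η * T)) * (z ⬝ᵥ z) := by rw [← mul_assoc, div_mul_cancel₀ _ KT_pos.ne']
    _ ≤ z ⬝ᵥ lap G *ᵥ z := h.le_dotProduct_lap dotProduct_one
    _ = y ⬝ᵥ lap G *ᵥ y := smul_one_add_dotProduct_lap_mulVec G _ y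

theorem splitL_dotProduct_lap_mulVec_le :
    splitL n ⬝ᵥ lap G *ᵥ splitL n ≤ n / 2 * ((T + g) / 2 + 2 * (η * T)) := by
  have wlap_noise_le := (abs_le.mp (h.abs_dotProduct_wlap_noise_le (splitL n))).2
  have dotProduct_self : splitL n ⬝ᵥ splitL n = n / 2 := by
    rw [splitL, blockVec_dotProduct_blockVec h.four_dvd]; ring
  have expected : splitL n ⬝ᵥ wlap (nestedMat n T g K) *ᵥ splitL n = n / 2 * ((T + g) / 2) := by
    rw [dotProduct_wlap_mulVec, nestedMat_mulVec_one h.four_dvd h.n_pos, expDeg, expDegL, sq,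
      splitL, blockVec_mul_blockVec, nestedMat_mulVec_blockVec h.four_dvd h.n_pos,
      blockVec_dotProduct_blockVec h.four_dvd, blockVec_dotProduct_blockVec h.four_dvd]
    ring
  rw [dotProduct_self] at wlap_noise_le
  rw [lap_mulVec_eq T g K, dotProduct_add, expected]
  linarith

theorem le_degVec_dotProduct_sq (a : ℝ) :
    n / 2 * (expDegL T g K - η * T) ≤ degVec G ⬝ᵥ (a • 1 + splitL n) ^ 2 := by
  have eta_T_lt := h.eta_T_lt_expDegL
  have n_pos := h.cast_pos
  have le_degVec (v : Fin n) :
      blockVec n (expDegL T g K - η * T) (expDegL T g K - η * T) 0 v ≤ degVec G v := by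
    have sub_le := (abs_le.mp (h.abs_degVec_sub_le v)).1
    have degVec_pos := h.degVec_pos v
    revert sub_le
    simp only [expDeg, blockVec]
    split_ifs <;> intro sub_le <;> linarith
  calc n / 2 * (expDegL T g K - η * T)
      ≤ n / 2 * (expDegL T g K - η * T) * (a ^ 2 + 1) :=
        le_mul_of_one_le_right (mul_nonneg (by positivity) (by linarith))
          (by linarith [sq_nonneg a])
    _ = blockVec n (expDegL T g K - η * T) (expDegL T g K - η * T) 0 ⬝ᵥ
          (a • 1 + splitL n) ^ 2 := by
        rw [smul_one_add_splitL, pow_two (blockVec n _ _ _), blockVec_mul_blockVec,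
          blockVec_dotProduct_blockVec h.four_dvd]
        ring
    _ ≤ _ := Finset.sum_le_sum fun v _ =>
        mul_le_mul_of_nonneg_right (le_degVec v) (sq_nonneg _)

/-- Cutting inside `L` is cheap relative to volume: `L₁` and `L₂` have large internal degree. -/
theorem eig_lapSym_le : eig (lapSym G) 1 ≤
    ((T + g) / 2 + 2 * (η * T)) / (expDegL T g K - η * T) := by
  have T_pos := h.T_pos
  have g_pos := h.g_pos
  have eta_T_pos := h.eta_T_pos
  have denominator_pos : 0 < expDegL T g K - η * T := sub_pos.mpr h.eta_T_lt_expDegL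
  refine eig_lapSym_one_le h.two_le_card h.degVec_pos (by positivity) (x := splitL n)
    (fun a ha => ?_) fun a => ?_
  · have volume_pos : 0 < n / 2 * (expDegL T g K - η * T) :=
      mul_pos (half_pos h.cast_pos) denominator_pos
    have volume_le := h.le_degVec_dotProduct_sq a
    rw [ha, zero_pow two_ne_zero, dotProduct_zero] at volume_le
    exact volume_pos.not_ge volume_le
  · calc splitL n ⬝ᵥ lap G *ᵥ splitL n ≤ n / 2 * ((T + g) / 2 + 2 * (η * T)) :=
          h.splitL_dotProduct_lap_mulVec_le
      _ = ((T + g) / 2 + 2 * (η * T)) / (expDegL T g K - η * T) *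
            (n / 2 * (expDegL T g K - η * T)) := by
          rw [mul_left_comm (_ / _), div_mul_cancel₀ _ denominator_pos.ne']
      _ ≤ _ := mul_le_mul_of_nonneg_left (h.le_degVec_dotProduct_sq a) (by positivity)

theorem eig_lapSym_le_three_quarters : eig (lapSym G) 1 ≤ 3 / 4 := by
  refine h.eig_lapSym_le.trans ((div_le_iff₀ (sub_pos.mpr h.eta_T_lt_expDegL)).mpr ?_)
  rw [expDegL]
  linarith [h.six_mul_T_le, h.eta_T_le, h.two_mul_le, h.T_pos]

end IsTypical

end NormalizedEigenvalue

section GeneralizedEigenvector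

theorem dotProduct_mul_eq_mul_dotProduct (x f y : Fin n → ℝ) : x ⬝ᵥ (f * y) = (x * f) ⬝ᵥ y := by
  simp only [dotProduct, Pi.mul_apply, mul_assoc]

theorem l2_mul_l2_le {x y : Fin n → ℝ} {t : ℝ} (hx : x ⬝ᵥ x ≤ t) (hy : y ⬝ᵥ y ≤ t) :
    l2 x * l2 y ≤ t := by
  have hxy := two_mul_le_add_sq (l2 x) (l2 y)
  rw [l2_sq, l2_sq] at hxy
  linarith

theorem abs_dotProduct_mul_le {f : Fin n → ℝ} {t : ℝ} (ht : 0 ≤ t) (hf : ∀ v, |f v| ≤ t)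
    (x y : Fin n → ℝ) : |x ⬝ᵥ (f * y)| ≤ t * (l2 x * l2 y) := by
  have l2_mul_le : l2 (f * y) ≤ t * l2 y := by
    refine l2_le_of_dotProduct_self_le (mul_nonneg ht (l2_nonneg y)) ?_
    rw [mul_pow, l2_sq, dotProduct, dotProduct, Finset.mul_sum]
    refine Finset.sum_le_sum fun v _ => ?_
    rw [Pi.mul_apply, mul_mul_mul_comm, ← sq, ← sq_abs]
    have := mul_self_nonneg (y v)
    gcongr
    exact hf v
  calc |x ⬝ᵥ (f * y)| ≤ l2 x * l2 (f * y) := abs_dotProduct_le_l2_mul_l2 x (f * y)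
    _ ≤ l2 x * (t * l2 y) := mul_le_mul_of_nonneg_left l2_mul_le (l2_nonneg x)
    _ = t * (l2 x * l2 y) := mul_left_comm _ _ _

namespace IsTypical

variable {α K T g η : ℝ} {G : SimpleGraph (Fin n)} (h : IsTypical α K T g η G)
include h

/-- Eliminating the mass of `L` from the two averaged equations leaves the mass of `R` with this
coefficient; `K ≥ 3α` is what keeps it positive. -/
theorem le_elimination_coefficient : T ^ 2 / 16 ≤
    expDegL T g K * ((1 - eig (lapSym G) 1) * (T + g) - T) + g * ((T + g) / 2) := by
  have eig_mul_le := (le_div_iff₀ (sub_pos.mpr h.eta_T_lt_expDegL)).mp h.eig_lapSym_le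
  have eig_le := h.eig_lapSym_le_three_quarters
  set t := eig (lapSym G) 1
  have T_pos := h.T_pos
  have g_pos := h.g_pos
  have eta_T_pos := h.eta_T_pos
  have unperturbed : T ^ 2 / 8 ≤ g * expDegL T g K - T * ((T + g) / 2) := by
    have K_term : 0 ≤ α * g ^ 2 * (K - 3 * α) :=
      mul_nonneg (mul_nonneg (by linarith [h.two_le]) (sq_nonneg g)) (by linarith [h.le_K])
    have α_term : 0 ≤ g ^ 2 * ((α - 1) ^ 2 + 3) := by positivity
    rw [expDegL, h.T_eq]
    nlinarith
  have eig_mul_expDegL_le : t * expDegL T g K * (T + g) ≤ ((T + g) / 2 + 3 * (η * T)) * (T + g) :=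
    mul_le_mul_of_nonneg_right (by nlinarith) (by positivity)
  have error_le : η * T * (T + g) * 3 ≤ T ^ 2 / 16 := by
    have := mul_le_mul (show η * T ≤ T / 16000 by linarith [h.eta_T_le, h.two_mul_le])
      (show T + g ≤ 3 / 2 * T by linarith [h.two_mul_le]) (by positivity) (by positivity)
    nlinarith
  linarith

variable {Y : Fin n → ℝ} (hE : lap G *ᵥ Y = eig (lapSym G) 1 • (degVec G * Y))
include hE

theorem degVec_dotProduct_eq_zero : degVec G ⬝ᵥ Y = 0 := by
  have sum_eq := one_dotProduct_lap_mulVec G Y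
  rw [hE, dotProduct_smul, dotProduct_mul_eq_mul_dotProduct, one_mul, smul_eq_mul] at sum_eq
  exact (mul_eq_zero.mp sum_eq).resolve_left h.eig_lapSym_pos.ne'

theorem expected_equation_eq_noise :
    (1 - eig (lapSym G) 1) • (expDeg n T g K * Y) - nestedMat n T g K *ᵥ Y =
      noise T g K G *ᵥ Y - (1 - eig (lapSym G) 1) • ((noise T g K G *ᵥ 1) * Y) := by
  funext v
  have entry := congrFun hE v
  rw [lap_mulVec, adjM_mulVec_eq T g K] at entry
  simp only [Pi.sub_apply, Pi.add_apply, Pi.smul_apply, Pi.mul_apply, smul_eq_mul,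
    h.degVec_eq] at entry ⊢
  linarith

theorem abs_dotProduct_expected_equation_le (x : Fin n → ℝ) :
    |x ⬝ᵥ ((1 - eig (lapSym G) 1) • (expDeg n T g K * Y) - nestedMat n T g K *ᵥ Y)| ≤
      2 * (η * T) * (l2 x * l2 Y) := by
  have one_sub_nonneg : 0 ≤ 1 - eig (lapSym G) 1 := by linarith [h.eig_lapSym_le_three_quarters]
  have one_sub_le : 1 - eig (lapSym G) 1 ≤ 1 := by linarith [h.eig_lapSym_pos]
  rw [h.expected_equation_eq_noise hE, dotProduct_sub, dotProduct_smul, smul_eq_mul]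
  calc _ ≤ |x ⬝ᵥ noise T g K G *ᵥ Y| +
          |(1 - eig (lapSym G) 1) * (x ⬝ᵥ ((noise T g K G *ᵥ 1) * Y))| := abs_sub _ _
    _ ≤ η * T * (l2 x * l2 Y) + 1 * (η * T * (l2 x * l2 Y)) := by
      rw [abs_mul, abs_of_nonneg one_sub_nonneg]
      gcongr
      exacts [h.form_le x Y, abs_dotProduct_mul_le h.eta_T_pos.le h.row_one x Y]
    _ = _ := by ring

variable (hY : Y ⬝ᵥ Y = n)
include hY

theorem abs_indR_equation_le :
    |(1 - eig (lapSym G) 1) * ((T + g) / 2 * (indR n ⬝ᵥ Y)) -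
      (g * (indL1 n ⬝ᵥ Y + indL2 n ⬝ᵥ Y) + T * (indR n ⬝ᵥ Y)) / 2| ≤ 2 * (η * T) * n := by
  have eta_T_pos := h.eta_T_pos
  have n_ne_zero := h.cast_pos.ne'
  have tested : indR n ⬝ᵥ ((1 - eig (lapSym G) 1) • (expDeg n T g K * Y) -
      nestedMat n T g K *ᵥ Y) = (1 - eig (lapSym G) 1) * ((T + g) / 2 * (indR n ⬝ᵥ Y)) -
      (g * (indL1 n ⬝ᵥ Y + indL2 n ⬝ᵥ Y) + T * (indR n ⬝ᵥ Y)) / 2 := by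
    have mul_expDeg : indR n * expDeg n T g K = blockVec n 0 0 ((T + g) / 2) := by
      rw [indR, expDeg, blockVec_mul_blockVec, zero_mul, one_mul]
    have indR_dotProduct : indR n ⬝ᵥ nestedMat n T g K *ᵥ Y =
        (g * (indL1 n ⬝ᵥ Y + indL2 n ⬝ᵥ Y) + T * (indR n ⬝ᵥ Y)) / 2 := by
      rw [nestedMat_mulVec, indR, blockVec_dotProduct_blockVec h.four_dvd, ← indR]
      field_simp
      ring
    rw [dotProduct_sub, dotProduct_smul, dotProduct_mul_eq_mul_dotProduct, mul_expDeg,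
      blockVec_dotProduct, indR_dotProduct, smul_eq_mul]
    ring
  have indR_self : indR n ⬝ᵥ indR n ≤ n := by
    rw [indR, blockVec_dotProduct_blockVec h.four_dvd]; linarith [h.cast_pos]
  rw [← tested]
  refine (h.abs_dotProduct_expected_equation_le hE (indR n)).trans ?_
  gcongr
  exact l2_mul_l2_le indR_self hY.le

theorem abs_expDeg_equation_le :
    |expDegL T g K * (indL1 n ⬝ᵥ Y + indL2 n ⬝ᵥ Y) + (T + g) / 2 * (indR n ⬝ᵥ Y)| ≤
      η * T * n := by
  have eta_T_pos := h.eta_T_pos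
  have degVec_eq_add : degVec G = expDeg n T g K + noise T g K G *ᵥ 1 := funext h.degVec_eq
  have expDeg_dotProduct : expDegL T g K * (indL1 n ⬝ᵥ Y + indL2 n ⬝ᵥ Y) +
      (T + g) / 2 * (indR n ⬝ᵥ Y) = -(1 ⬝ᵥ ((noise T g K G *ᵥ 1) * Y)) := by
    rw [dotProduct_mul_eq_mul_dotProduct, one_mul, eq_neg_iff_add_eq_zero,
      ← h.degVec_dotProduct_eq_zero hE, degVec_eq_add, add_dotProduct, expDeg, blockVec_dotProduct]
    ring
  rw [expDeg_dotProduct, abs_neg]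
  refine (abs_dotProduct_mul_le eta_T_pos.le h.row_one 1 Y).trans ?_
  gcongr
  exact l2_mul_l2_le (by simp) hY.le

theorem abs_indR_dotProduct_mul_le :
    |indR n ⬝ᵥ Y| * (T ^ 2 / 16) ≤ (4 * expDegL T g K + g) * (η * T * n) := by
  have coefficient_ge := h.le_elimination_coefficient
  have indR_equation := h.abs_indR_equation_le hE hY
  have expDeg_equation := h.abs_expDeg_equation_le hE hY
  have expDegL_pos : 0 < expDegL T g K := h.eta_T_pos.trans h.eta_T_lt_expDegL
  have g_pos := h.g_pos
  set t := eig (lapSym G) 1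
  set ℓ := indL1 n ⬝ᵥ Y + indL2 n ⬝ᵥ Y
  set r := indR n ⬝ᵥ Y
  calc |r| * (T ^ 2 / 16)
      ≤ |r| * (expDegL T g K * ((1 - t) * (T + g) - T) + g * ((T + g) / 2)) := by gcongr
    _ = |r * (expDegL T g K * ((1 - t) * (T + g) - T) + g * ((T + g) / 2))| := by
        rw [abs_mul, abs_of_nonneg ((by positivity : 0 ≤ T ^ 2 / 16).trans coefficient_ge)]
    _ = |2 * expDegL T g K * ((1 - t) * ((T + g) / 2 * r) - (g * ℓ + T * r) / 2) +
          g * (expDegL T g K * ℓ + (T + g) / 2 * r)| := by congr 1; ring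
    _ ≤ 2 * expDegL T g K * |(1 - t) * ((T + g) / 2 * r) - (g * ℓ + T * r) / 2| +
          g * |expDegL T g K * ℓ + (T + g) / 2 * r| := by
        refine (abs_add_le _ _).trans_eq ?_
        rw [abs_mul, abs_mul g, abs_of_pos g_pos, abs_of_pos (by positivity)]
    _ ≤ 2 * expDegL T g K * (2 * (η * T) * n) + g * (η * T * n) := by gcongr
    _ = _ := by ring

theorem abs_indR_dotProduct_le : |indR n ⬝ᵥ Y| ≤ n / 500 := by
  have T_pos := h.T_pos
  have n_pos := h.cast_pos
  have eta_T_pos := h.eta_T_pos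
  have coefficient_le : 4 * expDegL T g K + g ≤ 3 * (K * T) := by
    rw [expDegL]; linarith [h.six_mul_T_le, h.two_mul_le]
  refine le_of_mul_le_mul_right ?_ (by positivity : 0 < T ^ 2 / 16)
  calc |indR n ⬝ᵥ Y| * (T ^ 2 / 16) ≤ (4 * expDegL T g K + g) * (η * T * n) :=
        h.abs_indR_dotProduct_mul_le hE hY
    _ ≤ 3 * (K * T) * (η * T * n) := by gcongr
    _ = 3 * (T ^ 2 * n) * (K * η) := by ring
    _ ≤ 3 * (T ^ 2 * n) * (1 / 24000) := by gcongr; linarith [h.eta_K_le]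
    _ = n / 500 * (T ^ 2 / 16) := by ring

theorem abs_indL1_add_indL2_dotProduct_le : |indL1 n ⬝ᵥ Y + indL2 n ⬝ᵥ Y| ≤ n / 400 := by
  have T_pos := h.T_pos
  have n_pos := h.cast_pos
  have g_pos := h.g_pos
  have indR_le := h.abs_indR_dotProduct_le hE hY
  have expDeg_equation := h.abs_expDeg_equation_le hE hY
  have expDegL_ge : 7 / 4 * T ≤ expDegL T g K := by rw [expDegL]; linarith [h.six_mul_T_le]
  have expDegL_pos : 0 < expDegL T g K := by linarith
  set ℓ := indL1 n ⬝ᵥ Y + indL2 n ⬝ᵥ Y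
  set r := indR n ⬝ᵥ Y
  refine le_of_mul_le_mul_left ?_ (by positivity : 0 < 7 / 4 * T)
  calc 7 / 4 * T * |ℓ| ≤ expDegL T g K * |ℓ| := by gcongr
    _ = |expDegL T g K * ℓ + (T + g) / 2 * r - (T + g) / 2 * r| := by
        rw [add_sub_cancel_right, abs_mul, abs_of_pos expDegL_pos]
    _ ≤ |expDegL T g K * ℓ + (T + g) / 2 * r| + |(T + g) / 2 * r| := abs_sub _ _
    _ = |expDegL T g K * ℓ + (T + g) / 2 * r| + (T + g) / 2 * |r| := by
        rw [abs_mul ((T + g) / 2), abs_of_pos (by positivity : 0 < (T + g) / 2)]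
    _ ≤ T / 16000 * n + 3 / 4 * T * (n / 500) := by
        gcongr
        · exact expDeg_equation.trans
            (mul_le_mul_of_nonneg_right (by linarith [h.eta_T_le, h.two_mul_le]) n_pos.le)
        · linarith [h.two_mul_le]
    _ ≤ 7 / 4 * T * (n / 400) := by nlinarith

end IsTypical

end GeneralizedEigenvector

section BlockMeans

/-- The orthogonal projection of `Y` onto the vectors that are constant on `L₁`, `L₂` and `R`. -/
def blockMean (n : ℕ) (Y : Fin n → ℝ) : Fin n → ℝ :=
  blockVec n (4 * (indL1 n ⬝ᵥ Y) / n) (4 * (indL2 n ⬝ᵥ Y) / n) (2 * (indR n ⬝ᵥ Y) / n)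

theorem sub_blockMean_dotProduct_blockVec (hn : 4 ∣ n) (hn₀ : 0 < n) (Y : Fin n → ℝ) (a b c : ℝ) :
    (Y - blockMean n Y) ⬝ᵥ blockVec n a b c = 0 := by
  have n_ne_zero : (n : ℝ) ≠ 0 := mod_cast hn₀.ne'
  rw [sub_dotProduct, dotProduct_comm Y, blockVec_dotProduct, blockMean,
    blockVec_dotProduct_blockVec hn]
  field_simp
  ring

theorem dotProduct_self_eq_blockMean_add (hn : 4 ∣ n) (hn₀ : 0 < n) (Y : Fin n → ℝ) :
    Y ⬝ᵥ Y = blockMean n Y ⬝ᵥ blockMean n Y +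
      (Y - blockMean n Y) ⬝ᵥ (Y - blockMean n Y) := by
  have orthogonal : (Y - blockMean n Y) ⬝ᵥ blockMean n Y = 0 :=
    sub_blockMean_dotProduct_blockVec hn hn₀ Y _ _ _
  nth_rw 1 2 [← sub_add_cancel Y (blockMean n Y)]
  rw [add_dotProduct, dotProduct_add, dotProduct_add, dotProduct_comm (blockMean n Y) (Y - _),
    orthogonal]
  ring

theorem one_le_and_le_neg_one_of_abs_add_le {a b : ℝ} (hab : |a + b| ≤ 1 / 100)
    (hsq : 39 / 10 ≤ a ^ 2 + b ^ 2) : 1 ≤ a ∧ b ≤ -1 ∨ a ≤ -1 ∧ 1 ≤ b := by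
  obtain ⟨lower, upper⟩ := abs_le.mp hab
  rcases le_total 0 a with ha | ha
  · left; constructor <;> nlinarith
  · right; constructor <;> nlinarith

namespace IsTypical

variable {α K T g η : ℝ} {G : SimpleGraph (Fin n)} {Y : Fin n → ℝ} (h : IsTypical α K T g η G)
include h

/-- The expected adjacency matrix only sees `blockMean n Y`, so the residual has to be absorbed by
the degree term `(1 - λ₂) D`, which is bounded below. -/
theorem sub_blockMean_dotProduct_self_mul_le :
    T / 8 * ((Y - blockMean n Y) ⬝ᵥ (Y - blockMean n Y)) ≤ (Y - blockMean n Y) ⬝ᵥ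
      ((1 - eig (lapSym G) 1) • (expDeg n T g K * Y) - nestedMat n T g K *ᵥ Y) := by
  have orthogonal := sub_blockMean_dotProduct_blockVec h.four_dvd h.n_pos Y
  have eig_le := h.eig_lapSym_le_three_quarters
  set w := Y - blockMean n Y
  have expDeg_mul_le : T / 2 * (w ⬝ᵥ w) ≤ w ⬝ᵥ (expDeg n T g K * w) := by
    rw [dotProduct, dotProduct, Finset.mul_sum]
    refine Finset.sum_le_sum fun v _ => ?_
    rw [Pi.mul_apply, mul_left_comm (w v)]
    exact mul_le_mul_of_nonneg_right (by linarith [h.le_expDeg v, h.g_pos])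
      (mul_self_nonneg (w v))
  have nonneg : 0 ≤ T / 2 * (w ⬝ᵥ w) :=
    mul_nonneg (half_pos h.T_pos).le (by rw [← l2_sq]; positivity)
  have expDeg_dotProduct : w ⬝ᵥ (expDeg n T g K * Y) = w ⬝ᵥ (expDeg n T g K * w) := by
    have Y_eq : Y = w + blockMean n Y := (sub_add_cancel _ _).symm
    rw [Y_eq, mul_add, dotProduct_add, expDeg, blockMean, blockVec_mul_blockVec, orthogonal,
      add_zero]
  rw [dotProduct_sub w (_ • _), dotProduct_smul, smul_eq_mul, expDeg_dotProduct, nestedMat_mulVec,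
    orthogonal, sub_zero]
  calc T / 8 * (w ⬝ᵥ w) = 1 / 4 * (T / 2 * (w ⬝ᵥ w)) := by ring
    _ ≤ _ := mul_le_mul (by linarith) expDeg_mul_le nonneg (by linarith)

variable (hE : lap G *ᵥ Y = eig (lapSym G) 1 • (degVec G * Y))
include hE

theorem l2_sub_blockMean_le : l2 (Y - blockMean n Y) ≤ 16 * η * l2 Y := by
  have T_pos := h.T_pos
  have quadratic_le := (h.sub_blockMean_dotProduct_self_mul_le (Y := Y)).trans
    ((le_abs_self _).trans (h.abs_dotProduct_expected_equation_le hE (Y - blockMean n Y)))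
  rw [← l2_sq] at quadratic_le
  rcases (l2_nonneg (Y - blockMean n Y)).eq_or_lt with norm_zero | norm_pos
  · rw [← norm_zero]
    exact mul_nonneg (by linarith [h.eta_pos]) (l2_nonneg Y)
  · refine le_of_mul_le_mul_left ?_ (by positivity : 0 < T / 8 * l2 (Y - blockMean n Y))
    linarith

variable (hY : Y ⬝ᵥ Y = n)
include hY

theorem sub_blockMean_dotProduct_self_le :
    (Y - blockMean n Y) ⬝ᵥ (Y - blockMean n Y) ≤ n / 100 := by
  have eta_pos := h.eta_pos
  have eta_le : η ≤ 1 / 160 := by nlinarith [h.eta_K_le, h.six_le]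
  have n_pos := h.cast_pos
  calc (Y - blockMean n Y) ⬝ᵥ (Y - blockMean n Y) = l2 (Y - blockMean n Y) ^ 2 := (l2_sq _).symm
    _ ≤ (16 * η * l2 Y) ^ 2 := pow_le_pow_left₀ (l2_nonneg _) (h.l2_sub_blockMean_le hE) 2
    _ = (16 * η) ^ 2 * n := by rw [mul_pow, l2_sq, hY]
    _ ≤ (16 * (1 / 160)) ^ 2 * n := by gcongr
    _ = n / 100 := by ring

theorem blockMean_separates :
    1 ≤ 4 * (indL1 n ⬝ᵥ Y) / n ∧ 4 * (indL2 n ⬝ᵥ Y) / n ≤ -1 ∨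
      4 * (indL1 n ⬝ᵥ Y) / n ≤ -1 ∧ 1 ≤ 4 * (indL2 n ⬝ᵥ Y) / n := by
  have n_pos := h.cast_pos
  have pythagoras := dotProduct_self_eq_blockMean_add h.four_dvd h.n_pos Y
  have residual_le := h.sub_blockMean_dotProduct_self_le hE hY
  have abs_add_le : |4 * (indL1 n ⬝ᵥ Y) / n + 4 * (indL2 n ⬝ᵥ Y) / n| ≤ 1 / 100 := by
    rw [← add_div, ← mul_add, abs_div, abs_mul, Nat.abs_cast, div_le_iff₀ n_pos, Nat.abs_ofNat]
    linarith [h.abs_indL1_add_indL2_dotProduct_le hE hY]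
  have abs_R_le : |2 * (indR n ⬝ᵥ Y) / n| ≤ 1 / 100 := by
    rw [abs_div, abs_mul, abs_two, Nat.abs_cast, div_le_iff₀ n_pos]
    linarith [h.abs_indR_dotProduct_le hE hY]
  have sq_R_le : (2 * (indR n ⬝ᵥ Y) / n) ^ 2 ≤ (1 / 100) ^ 2 := sq_le_sq' (abs_le.mp abs_R_le).1
    (abs_le.mp abs_R_le).2
  have blockMean_eq : blockMean n Y ⬝ᵥ blockMean n Y = _ :=
    blockVec_dotProduct_blockVec h.four_dvd _ _ _ _ _ _
  refine one_le_and_le_neg_one_of_abs_add_le abs_add_le ?_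
  rw [hY, blockMean_eq] at pythagoras
  refine le_of_mul_le_mul_left ?_ (by positivity : 0 < (n : ℝ) / 4)
  have := mul_le_mul_of_nonneg_left sq_R_le n_pos.le
  linarith

theorem le_misclassRate_of_dotProduct_self_eq : 24 / 100 ≤ misclassRate n {v | Y v < 0} := by
  refine le_misclassRate_of_blockVec h.four_dvd h.n_pos (h.blockMean_separates hE hY)
    (c := 2 * (indR n ⬝ᵥ Y) / n) ?_
  have residual_le := h.sub_blockMean_dotProduct_self_le hE hY
  rw [blockMean] at residual_le
  linarith

end IsTypical

theorem setOf_mul_neg {f : Fin n → ℝ} (hf : ∀ v, 0 < f v) (y : Fin n → ℝ) :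
    {v | (f * y) v < 0} = {v | y v < 0} :=
  Set.ext fun v => by simp [mul_neg_iff, hf v, (hf v).not_gt]

namespace IsTypical

variable {α K T g η : ℝ} {G : SimpleGraph (Fin n)} (h : IsTypical α K T g η G)
include h

theorem le_misclassRate_of_lap_mulVec_eq {y : Fin n → ℝ} (hy : y ≠ 0)
    (hE : lap G *ᵥ y = eig (lapSym G) 1 • (degVec G * y)) :
    24 / 100 ≤ misclassRate n {v | y v < 0} := by
  have dotProduct_self_pos : 0 < y ⬝ᵥ y := by simpa using dotProduct_self_star_pos_iff.mpr hy
  have scale_pos : 0 < √(n / (y ⬝ᵥ y)) := Real.sqrt_pos.mpr (div_pos h.cast_pos dotProduct_self_pos)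
  rw [← setOf_mul_neg (f := fun _ => √(n / (y ⬝ᵥ y))) (fun _ => scale_pos)]
  change 24 / 100 ≤ misclassRate n {v | (√(n / (y ⬝ᵥ y)) • y) v < 0}
  refine h.le_misclassRate_of_dotProduct_self_eq ?_ ?_
  · rw [mulVec_smul, hE, mul_smul_comm, smul_comm]
  · rw [smul_dotProduct, dotProduct_smul, smul_smul, Real.mul_self_sqrt (by positivity),
      smul_eq_mul, div_mul_cancel₀ _ dotProduct_self_pos.ne']

theorem le_misclassRate_lapSym {u : Fin n → ℝ}
    (hu : IsUnitEigenvector (lapSym G) (eig (lapSym G) 1) u) :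
    24 / 100 ≤ misclassRate n {v | u v < 0} := by
  obtain ⟨y, rfl⟩ := exists_eq_sqrtDeg_mul h.degVec_pos u
  rw [setOf_mul_neg (sqrtDeg_pos h.degVec_pos)]
  refine h.le_misclassRate_of_lap_mulVec_eq ?_ (lap_mulVec_of_lapSym_mulVec h.degVec_pos hu.1)
  rintro rfl
  simpa using hu.2

theorem le_misclassRate_lapRW {u : Fin n → ℝ}
    (hu : IsUnitEigenvector (lapRW G) (eig (lapRW G) 1) u) :
    24 / 100 ≤ misclassRate n {v | u v < 0} := by
  refine h.le_misclassRate_of_lap_mulVec_eq ?_ ?_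
  · rintro rfl
    simpa using hu.2
  · rw [← eig_lapRW h.degVec_pos]
    exact lap_mulVec_of_lapRW_mulVec h.degVec_pos hu.1

end IsTypical

end BlockMeans

section Deviations

variable {P : Fin n → Fin n → ℝ}

theorem adjM_sub_of_eq (P : Fin n → Fin n → ℝ) (G : SimpleGraph (Fin n)) :
    adjM G - Matrix.of P = centred P G - Matrix.diagonal fun v => P v v := by
  ext v w
  rcases eq_or_ne v w with rfl | hvw
  · simp [centred, offP]
  · simp [centred, offP, hvw]

theorem abs_adjM_sub_of_mulVec_le (hP : IsEdgeProbability P) {G : SimpleGraph (Fin n)}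
    {x : Fin n → ℝ} {v : Fin n} {s : ℝ} (hrow : |∑ w, centred P G v w * x w| ≤ s * ‖x‖) :
    |((adjM G - Matrix.of P) *ᵥ x) v| ≤ (s + 1) * ‖x‖ := by
  have diagonal_le : |P v v * x v| ≤ 1 * ‖x‖ := by
    rw [abs_mul, abs_of_nonneg (hP.nonneg v v)]
    exact mul_le_mul (hP.le_one v v) (norm_le_pi_norm x v) (abs_nonneg _) zero_le_one
  rw [adjM_sub_of_eq, Matrix.sub_mulVec, Pi.sub_apply, Matrix.mulVec_diagonal, add_mul]
  exact (abs_sub _ _).trans (add_le_add hrow diagonal_le)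

theorem abs_dotProduct_adjM_sub_of_mulVec_le (hP : IsEdgeProbability P) {G : SimpleGraph (Fin n)}
    {k : ℕ} (hk : k ≠ 0) {s : ℝ} (hs : 0 ≤ s)
    (htrace : (centred P G ^ (2 * k)).trace ≤ s ^ (2 * k)) (x y : Fin n → ℝ) :
    |x ⬝ᵥ (adjM G - Matrix.of P) *ᵥ y| ≤ (s + 1) * (l2 x * l2 y) := by
  have diagonal_le : |x ⬝ᵥ ((fun v => P v v) * y)| ≤ 1 * (l2 x * l2 y) :=
    abs_dotProduct_mul_le zero_le_one
      (fun v => (abs_of_nonneg (hP.nonneg v v)).trans_le (hP.le_one v v)) x y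
  have diagonal_mulVec : Matrix.diagonal (fun v => P v v) *ᵥ y = (fun v => P v v) * y :=
    funext fun v => Matrix.mulVec_diagonal _ _ _
  rw [adjM_sub_of_eq, Matrix.sub_mulVec, dotProduct_sub, diagonal_mulVec, add_mul]
  exact (abs_sub _ _).trans (add_le_add
    (abs_dotProduct_mulVec_le_of_trace_pow_le (isHermitian_centred hP G) hk hs htrace x y)
    diagonal_le)

/-- The event that row `v` of the centred adjacency matrix is not small on the vector that `x`
assigns to the graph without the edges at `v`. -/
def rowDeviation (P : Fin n → Fin n → ℝ) (s : ℝ) (x : SimpleGraph (Fin n) → Fin n → ℝ)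
    (v : Fin n) : Set (SimpleGraph (Fin n)) :=
  {G | s * ‖x (isolate G v)‖ < |∑ w, centred P G v w * x (isolate G v) w|}

/-- The event that the centred adjacency matrix has a large trace moment of order `2 * k`. -/
def traceDeviation (P : Fin n → Fin n → ℝ) (s : ℝ) (k : ℕ) : Set (SimpleGraph (Fin n)) :=
  {G | s ^ (2 * k) ≤ (centred P G ^ (2 * k)).trace}

/-- A vector that captures the eigenvectors of `lap H` near `g`, chosen as a function of `H` alone;
it is `0` when there is none. -/
def captureVec (g : ℝ) (H : SimpleGraph (Fin n)) : Fin n → ℝ :=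
  if h : ∃ y, CapturesNear (lap H) g (g / 4) y then h.choose else 0

theorem capturesNear_captureVec {g : ℝ} {H : SimpleGraph (Fin n)}
    (h : ∃ y, CapturesNear (lap H) g (g / 4) y) :
    CapturesNear (lap H) g (g / 4) (captureVec g H) := by
  rw [captureVec, dif_pos h]
  exact h.choose_spec

/-- The event that some deviation from the expectation needed for `IsTypical` is large. -/
def deviation (P : Fin n → Fin n → ℝ) (g s : ℝ) (k : ℕ) : Set (SimpleGraph (Fin n)) :=
  traceDeviation P s k ∪ ⋃ v, rowDeviation P s (fun _ => 1) v ∪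
    (rowDeviation P s (fun _ => planted n) v ∪ rowDeviation P s (captureVec g) v)

theorem real_deviation_le (μ : PMF (SimpleGraph (Fin n))) {g s a b : ℝ} {k : ℕ}
    (htrace : μ.toMeasure.real (traceDeviation P s k) ≤ a)
    (hrow : ∀ x v, μ.toMeasure.real (rowDeviation P s x v) ≤ b) :
    μ.toMeasure.real (deviation P g s k) ≤ a + n * (b + (b + b)) := by
  refine (measureReal_union_le _ _).trans (add_le_add htrace ?_)
  calc _ ≤ ∑ v, _ := measureReal_iUnion_fintype_le _
    _ ≤ ∑ _v : Fin n, (b + (b + b)) := Finset.sum_le_sum fun v _ =>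
        (measureReal_union_le _ _).trans (add_le_add (hrow _ v)
          ((measureReal_union_le _ _).trans (add_le_add (hrow _ v) (hrow _ v))))
    _ = n * (b + (b + b)) := by simp [mul_add]

theorem one_le_log_of_four_dvd (hn : 4 ∣ n) (hn₀ : 0 < n) : 1 ≤ Real.log n := by
  have four_le : (4 : ℝ) ≤ n := mod_cast Nat.le_of_dvd hn₀ hn
  rw [Real.le_log_iff_exp_le (by linarith)]
  linarith [Real.exp_one_lt_d9]

theorem exp_neg_four_mul_log (hn₀ : 0 < n) :
    Real.exp (-(4 * Real.log n)) = ((n : ℝ) ^ 4)⁻¹ := by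
  rw [Real.exp_neg, mul_comm, Real.exp_mul, Real.exp_log (mod_cast hn₀)]
  norm_cast

theorem exp_four_le : Real.exp 4 ≤ 81 := by
  have exp_one_le : Real.exp 1 ≤ 3 := by linarith [Real.exp_one_lt_d9]
  calc Real.exp 4 = Real.exp 1 ^ 4 := by rw [← Real.exp_nat_mul]; norm_num
    _ ≤ 3 ^ 4 := pow_le_pow_left₀ (Real.exp_pos 1).le exp_one_le 4
    _ = 81 := by norm_num

end Deviations

section Probability

namespace IsNestedRegime

variable {α K T g η : ℝ} (h : IsNestedRegime n α K T g η)
include h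

theorem nestedP_nonneg (v w : Fin n) : 0 ≤ nestedP n (T / n) (g / n) K v w :=
  _root_.nestedP_nonneg (div_pos h.T_pos h.cast_pos).le (div_pos h.g_pos h.cast_pos).le
    (by linarith [h.six_le]) v w

theorem mul_nestedP_le (v w : Fin n) : n * nestedP n (T / n) (g / n) K v w ≤ K * T := by
  have n_pos := h.cast_pos
  calc n * nestedP n (T / n) (g / n) K v w ≤ n * (K * (T / n)) := by
        gcongr
        exact nestedP_le (div_pos h.T_pos n_pos).le
          (div_le_div_of_nonneg_right h.g_le n_pos.le) (by linarith [h.six_le]) v w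
    _ = K * T := by field_simp

theorem sum_nestedP_le (v : Fin n) : ∑ w, nestedP n (T / n) (g / n) K v w ≤ K * T := by
  have n_pos := h.cast_pos
  calc ∑ w, nestedP n (T / n) (g / n) K v w ≤ ∑ _w : Fin n, K * T / n :=
        Finset.sum_le_sum fun w _ => (le_div_iff₀' n_pos).mpr (h.mul_nestedP_le v w)
    _ = K * T := by simp; field_simp

variable (hKT : K * T ≤ n)
include hKT

theorem isEdgeProbability : IsEdgeProbability (nestedP n (T / n) (g / n) K) where
  comm := nestedP_comm _ _ _
  nonneg := h.nestedP_nonneg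
  le_one v w := le_of_mul_le_mul_left
    ((h.mul_nestedP_le v w).trans (hKT.trans_eq (mul_one _).symm)) h.cast_pos

theorem isTypical_of_notMem_deviation {k : ℕ} (hk : k ≠ 0) {G : SimpleGraph (Fin n)}
    (hG : G ∉ deviation (nestedP n (T / n) (g / n) K) g (η / 2 * T) k) :
    IsTypical α K T g η G := by
  have hP := h.isEdgeProbability hKT
  simp only [deviation, rowDeviation, traceDeviation, Set.mem_union, Set.mem_iUnion,
    Set.mem_ofPred_eq, not_or, not_exists, not_lt, not_le] at hG
  obtain ⟨trace_lt, row_le⟩ := hG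
  have scale_le : η / 2 * T + 1 ≤ η * T := by linarith [h.two_le_eta_T]
  have noise_mulVec_le (x : Fin n → ℝ) (v : Fin n)
      (hx : |∑ w, centred (nestedP n (T / n) (g / n) K) G v w * x w| ≤ η / 2 * T * ‖x‖) :
      |(noise T g K G *ᵥ x) v| ≤ η * T * ‖x‖ :=
    (abs_adjM_sub_of_mulVec_le hP hx).trans (by gcongr)
  have mul_norm_le {x : Fin n → ℝ} (hx : ∀ v, |x v| ≤ 1) : η * T * ‖x‖ ≤ η * T :=
    mul_le_of_le_one_right h.eta_T_pos.le ((pi_norm_le_iff_of_nonneg zero_le_one).mpr hx)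
  refine { h with form_le := ?_, row_one := ?_, row_planted := ?_, row_capture := ?_ }
  · intro x y
    refine (abs_dotProduct_adjM_sub_of_mulVec_le hP hk (by linarith [h.eta_T_pos])
      trace_lt.le x y).trans ?_
    exact mul_le_mul_of_nonneg_right scale_le (mul_nonneg (l2_nonneg x) (l2_nonneg y))
  · exact fun v => (noise_mulVec_le 1 v (row_le v).1).trans (mul_norm_le fun _ => by simp)
  · exact fun v => (noise_mulVec_le (planted n) v (row_le v).2.1).trans
      (mul_norm_le fun w => (abs_planted_apply w).le)
  · exact fun v hv =>
      ⟨_, capturesNear_captureVec hv, noise_mulVec_le _ v (row_le v).2.2⟩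

variable (hlog : 6000 * K * Real.log n ≤ η ^ 2 * T) {μ : PMF (SimpleGraph (Fin n))}
  (hμ : IsEdgeProduct (nestedP n (T / n) (g / n) K) μ)
include hlog hμ

theorem real_rowDeviation_le (x : SimpleGraph (Fin n) → Fin n → ℝ) (v : Fin n) :
    μ.toMeasure.real (rowDeviation (nestedP n (T / n) (g / n) K) (η / 2 * T) x v) ≤
      2 * Real.exp (-(4 * Real.log n)) := by
  have K_pos : 0 < K := by linarith [h.six_le]
  have eta_pos := h.eta_pos
  have log_pos : 0 < K * Real.log n :=
    mul_pos K_pos (by linarith [one_le_log_of_four_dvd h.four_dvd h.n_pos])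
  -- `θ = η / (4 K)` minimizes the exponent `θ ^ 2 * (K * T) - θ * (η / 2 * T)`.
  refine (hμ.real_lt_abs_row_le (h.isEdgeProbability hKT) (θ := η / (4 * K)) (by positivity)
    ((div_le_one (by positivity)).mpr (by linarith [h.eta_le_one, h.six_le])) v
    (h.sum_nestedP_le v) x (η / 2 * T)).trans ?_
  have exponent_eq : (η / (4 * K)) ^ 2 * (K * T) - η / (4 * K) * (η / 2 * T) =
      -(η ^ 2 * T / (16 * K)) := by
    field_simp
    ring
  rw [exponent_eq]
  gcongr
  rw [le_div_iff₀ (by positivity)]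
  linarith

theorem real_traceDeviation_le :
    μ.toMeasure.real
        (traceDeviation (nestedP n (T / n) (g / n) K) (η / 2 * T) ⌈Real.log n⌉₊) ≤
      n * Real.exp (-(4 * Real.log n)) := by
  have one_le_log := one_le_log_of_four_dvd h.four_dvd h.n_pos
  have log_le : Real.log n ≤ ⌈Real.log n⌉₊ := Nat.le_ceil _
  have ceil_le : (⌈Real.log n⌉₊ : ℝ) ≤ 2 * Real.log n := by
    linarith [Nat.ceil_lt_add_one (by linarith : 0 ≤ Real.log n)]
  set k := ⌈Real.log n⌉₊
  have T_pos := h.T_pos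
  have eta_pos := h.eta_pos
  have K_pos : 0 < K := by linarith [h.six_le]
  have two_mul_le : 2 * (k : ℝ) ≤ K * T := by
    have : η ^ 2 * T ≤ 1 * T :=
      mul_le_mul_of_nonneg_right (pow_le_one₀ eta_pos.le h.eta_le_one) T_pos.le
    nlinarith [h.six_le]
  have base_le : 8 * k * (K * T) / (η / 2 * T) ^ 2 ≤ Real.exp (-4) := by
    have base_eq : 8 * k * (K * T) / (η / 2 * T) ^ 2 = 32 * k * K / (η ^ 2 * T) := by
      field_simp
      ring
    rw [base_eq, div_le_iff₀ (by positivity), Real.exp_neg]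
    calc 32 * k * K ≤ (81 : ℝ)⁻¹ * (6000 * K * Real.log n) := by
          linarith [mul_le_mul_of_nonneg_right ceil_le K_pos.le,
            mul_pos K_pos (by linarith : 0 < Real.log n)]
      _ ≤ (Real.exp 4)⁻¹ * (η ^ 2 * T) := by
          gcongr
          exact exp_four_le
  calc _ ≤ n * (8 * k * (K * T) / (η / 2 * T) ^ 2) ^ k :=
        hμ.real_le_trace_pow_le (h.isEdgeProbability hKT) (Nat.ceil_pos.mpr (by linarith))
          h.mul_nestedP_le two_mul_le h.n_pos (by positivity)
    _ ≤ n * Real.exp (-4) ^ k := by gcongr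
    _ = n * Real.exp (-(4 * k)) := by rw [← Real.exp_nat_mul]; ring_nf
    _ ≤ n * Real.exp (-(4 * Real.log n)) := by gcongr

theorem real_not_isTypical_le :
    μ.toMeasure.real {G | ¬ IsTypical α K T g η G} ≤ 1 / n := by
  have n_pos := h.cast_pos
  have four_le : (4 : ℝ) ≤ n := mod_cast Nat.le_of_dvd h.n_pos h.four_dvd
  have ceil_ne_zero : ⌈Real.log n⌉₊ ≠ 0 :=
    (Nat.ceil_pos.mpr (by linarith [one_le_log_of_four_dvd h.four_dvd h.n_pos])).ne'
  have subset : {G | ¬ IsTypical α K T g η G} ⊆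
      deviation (nestedP n (T / n) (g / n) K) g (η / 2 * T) ⌈Real.log n⌉₊ := fun G hG =>
    not_not.mp fun hnot => hG (h.isTypical_of_notMem_deviation hKT ceil_ne_zero hnot)
  calc _ ≤ _ := measureReal_mono subset
    _ ≤ _ := real_deviation_le μ (h.real_traceDeviation_le hKT hlog hμ)
        (h.real_rowDeviation_le hKT hlog hμ)
    _ = 7 / (n : ℝ) ^ 2 * (1 / n) := by
        rw [exp_neg_four_mul_log h.n_pos]
        field_simp
        norm_num
    _ ≤ 1 * (1 / n) := by
        gcongr
        rw [div_le_one (by positivity)]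
        nlinarith
    _ = 1 / n := one_mul _

end IsNestedRegime

theorem isNestedRegime_of_log_le {α K T g η : ℝ} (hn : 4 ∣ n) (hn₀ : 0 < n) (hα : 2 ≤ α)
    (hK : 3 * α ≤ K) (hg : 0 < g) (hT : T = α * g) (hη : 0 < η) (hηK : 4000 * K ^ 2 * η ≤ 1)
    (hlog : 6000 * K * Real.log n ≤ η ^ 2 * T) : IsNestedRegime n α K T g η := by
  have T_pos : 0 < T := by rw [hT]; positivity
  have six_le : 6 ≤ K := by linarith
  have sq_mul_le : 6000 * K ≤ η * (η * T) := by
    nlinarith [one_le_log_of_four_dvd hn hn₀]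
  have eta_le : η ≤ 1 := by nlinarith
  have eta_T_le : η * T ≤ T := mul_le_of_le_one_left T_pos.le eta_le
  refine ⟨hn, hn₀, hg, hT, hα, hK, hη, hηK, by nlinarith [mul_pos hη T_pos], ?_⟩
  calc 256 * α ^ 2 * K ≤ 256 * K ^ 2 * K := by gcongr; linarith
    _ ≤ 4000 * K ^ 2 * (6000 * K) := by nlinarith [sq_nonneg K]
    _ ≤ 4000 * K ^ 2 * (η * (η * T)) := by gcongr
    _ = (4000 * K ^ 2 * η) * (η * T) := by ring
    _ ≤ 1 * T := by gcongr
    _ = T := one_mul T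

end Probability

/-- **Theorem 3 (inconsistency of normalized spectral bisection).**
For every constant `α ≥ 2` and `K ≥ 3α` there are `c > 0` and `N` such that for every
`n ≥ N` divisible by `4` and parameters `p = αq ≥ c log n / n` (with `Kp ≤ 1`), the
nested block distribution is an NSSBM instance on which unnormalized spectral bisection
is strongly consistent, while normalized spectral bisection — with either `𝓛_sym` or
`𝓛_rw` — misclassifies at least `24%` of the vertices with probability at least `1 - 1/n`. -/
theorem normalized_bisection_inconsistent :
    ∀ α K : ℝ, 2 ≤ α → 3 * α ≤ K → ∃ c : ℝ, 0 < c ∧ ∃ N : ℕ, ∀ n : ℕ, N ≤ n → 4 ∣ n →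
      ∀ p q : ℝ, 0 < q → p = α * q → c * Real.log n / n ≤ p → K * p ≤ 1 →
      ∀ μ : PMF (SimpleGraph (Fin n)), IsEdgeProduct (nestedP n p q K) μ →
        (1 - 1 / (n : ℝ≥0∞) ≤ μ.toMeasure {G | BisectCorrect n (lap G)}) ∧
        (1 - 1 / (n : ℝ≥0∞) ≤ μ.toMeasure {G |
          ∀ u : Fin n → ℝ, IsUnitEigenvector (lapSym G) (eig (lapSym G) 1) u →
            24 / 100 ≤ misclassRate n {v | u v < 0}}) ∧
        (1 - 1 / (n : ℝ≥0∞) ≤ μ.toMeasure {G |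
          ∀ u : Fin n → ℝ, IsUnitEigenvector (lapRW G) (eig (lapRW G) 1) u →
            24 / 100 ≤ misclassRate n {v | u v < 0}}) := by
  intro α K hα hK
  have K_pos : 0 < K := by linarith
  set η := 1 / (4000 * K ^ 2)
  have eta_pos : 0 < η := by positivity
  refine ⟨6000 * K / η ^ 2, by positivity, 1, fun n hn h4 p q hq hp hc hKp μ hμ => ?_⟩
  have n_pos : (0 : ℝ) < n := mod_cast hn
  have hlog : 6000 * K * Real.log n ≤ η ^ 2 * (n * p) := by
    rw [div_le_iff₀ n_pos, div_mul_eq_mul_div, div_le_iff₀ (by positivity)] at hc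
    linarith
  have regime : IsNestedRegime n α K (n * p) (n * q) η := isNestedRegime_of_log_le h4 hn hα hK
    (by positivity) (by rw [hp]; ring) eta_pos (mul_one_div_cancel (by positivity)).le hlog
  rw [← mul_div_cancel_left₀ p n_pos.ne', ← mul_div_cancel_left₀ q n_pos.ne'] at hμ
  have not_typical_le := regime.real_not_isTypical_le (by nlinarith) hlog hμ
  have typically {E : Set (SimpleGraph (Fin n))}
      (hE : {G | IsTypical α K (n * p) (n * q) η G} ⊆ E) :
      1 - 1 / (n : ℝ≥0∞) ≤ μ.toMeasure E :=
    one_sub_le_toMeasure_of_real_compl_le <|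
      (measureReal_mono (Set.compl_subset_compl.mpr hE)).trans not_typical_le
  exact ⟨typically fun _ hT => hT.bisectCorrect, typically fun _ hT _ => hT.le_misclassRate_lapSym,
    typically fun _ hT _ => hT.le_misclassRate_lapRW⟩

end
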